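/- arXiv:2403.09989 — 2 statements merged into one kernel-verified Lean document; each statement's English description precedes it below -/
import Mathlib

section
/- Lorentz-space dispersive estimate: fix d ≥ 1, 2 < r < ∞, and 1 ≤ θ ≤ ∞, and let r' be the conjugate exponent of r. Then for every t ≠ 0 and every u_0 ∈ L^{r',θ}(ℝ^d), ‖e^{itΔ}u_0‖_{L^{r,θ}(ℝ^d)} ≤ C |t|^{−d(1/2 − 1/r)} ‖u_0‖_{L^{r',θ}(ℝ^d)}, with C depending only on d, r, θ. -/
open MeasureTheory Set
open scoped ENNReal Real

noncomputable section

/-- The free Schrödinger propagator `e^{itΔ}` acting on functions on a `d`-dimensional space: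
for `t ≠ 0`, `(e^{itΔ}f)(x) = (4πit)^{-d/2} ∫ e^{i|x-y|²/(4t)} f(y) dy`, and `e^{i0Δ}f = f`. -/
def schrod {E : Type*} [NormedAddCommGroup E] [MeasureSpace E] (d : ℕ) (t : ℝ) (f : E → ℂ) :
    E → ℂ :=
  if t = 0 then f
  else fun x =>
    (4 * (Real.pi : ℂ) * Complex.I * (t : ℂ)) ^ (-(d : ℂ) / 2) *
      ∫ y, Complex.exp (Complex.I * ((‖x - y‖ ^ 2 : ℝ) : ℂ) / (4 * (t : ℂ))) * f y

/-- Mixed Lebesgue norm `‖u‖_{L^p_t L^q_x (I × space)}`. -/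
def mixedNorm {α : Type*} [MeasurableSpace α] (ν : Measure α) (I : Set ℝ) (p q : ℝ≥0∞)
    (u : ℝ → α → ℂ) : ℝ≥0∞ :=
  if p = ∞ then essSup (fun t => eLpNorm (u t) q ν) (volume.restrict I)
  else (∫⁻ t in I, eLpNorm (u t) q ν ^ p.toReal) ^ (1 / p.toReal)

/-- Lorentz quasinorm `p^{1/q} ‖ λ · ν({g > λ})^{1/p} ‖_{L^q((0,∞), dλ/λ)}`
for an `ℝ≥0∞`-valued function `g`. -/
def lorentzNorm {α : Type*} [MeasurableSpace α] (ν : Measure α) (p q : ℝ≥0∞)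
    (g : α → ℝ≥0∞) : ℝ≥0∞ :=
  if q = ∞ then
    ⨆ l ∈ Set.Ioi (0 : ℝ), ENNReal.ofReal l * ν {x | ENNReal.ofReal l < g x} ^ p⁻¹.toReal
  else
    (p * ∫⁻ l in Set.Ioi (0 : ℝ),
        (ENNReal.ofReal l * ν {x | ENNReal.ofReal l < g x} ^ p⁻¹.toReal) ^ q.toReal /
          ENNReal.ofReal l) ^ q⁻¹.toReal

/-- Lorentz quasinorm `‖f‖_{L^{p,q}}` of a scalar function. -/
def lorentzNormC {α : Type*} [MeasurableSpace α] (ν : Measure α) (p q : ℝ≥0∞)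
    (f : α → ℂ) : ℝ≥0∞ :=
  lorentzNorm ν p q fun x => (‖f x‖₊ : ℝ≥0∞)

/-- Lorentz-in-time mixed norm `‖u‖_{L^{p,q}_t L^r_x (I × space)}`. -/
def lorentzMixedNorm {α : Type*} [MeasurableSpace α] (ν : Measure α) (I : Set ℝ)
    (p q r : ℝ≥0∞) (u : ℝ → α → ℂ) : ℝ≥0∞ :=
  lorentzNorm (volume.restrict I) p q fun t => eLpNorm (u t) r ν

/-- The nonlinearity `|f|^a f`. -/
def nonlin {E : Type*} (a : ℝ) (f : E → ℂ) : E → ℂ := fun x => ((‖f x‖ ^ a : ℝ) : ℂ) * f x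

open FourierTransform SchwartzMap in
lemma plancherel_aux {E : Type*} [NormedAddCommGroup E] [InnerProductSpace ℝ E] [FiniteDimensional ℝ E]
  [MeasurableSpace E] [BorelSpace E] (f : E → ℂ) (h1 : Integrable f) (h2 : MemLp f 2 (volume : Measure E)) :
   eLpNorm (𝓕 f) 2 volume = eLpNorm f 2 volume := by
  set F : Lp (α := E) ℂ 2 := h2.toLp f with hF
  have key : (𝓕 F : Lp ℂ 2 (volume : Measure E)) =ᵐ[volume] 𝓕 f := by
    have hc : Continuous (𝓕 f) := by
      exact VectorFourier.fourierIntegral_continuous Real.continuous_fourierChar (by exact continuous_inner) h1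
    apply ae_eq_of_integral_contDiff_smul_eq
    · exact (Lp.memLp _).locallyIntegrable (by norm_num)
    · exact hc.locallyIntegrable
    intro g hg hgc
    have hg₁ : HasCompactSupport (Complex.ofRealCLM ∘ g) := hgc.comp_left rfl
    have hg₂ : ContDiff ℝ (⊤ : ℕ∞) (Complex.ofRealCLM ∘ g) := by fun_prop
    have e1 := congrArg (fun T : 𝓢'(E, ℂ) => T (hg₁.toSchwartzMap hg₂)) (Lp.fourier_toTemperedDistribution_eq F)
    simp only [TemperedDistribution.fourier_apply, Lp.toTemperedDistribution_apply] at e1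
    have e2 : ∫ x, g x • (𝓕 F : Lp ℂ 2 (volume : Measure E)) x = ∫ x, (hg₁.toSchwartzMap hg₂) x • (𝓕 F : Lp ℂ 2 (volume : Measure E)) x := by
      simp
    rw [e2, ← e1]
    have e3 : ∫ x, (𝓕 (hg₁.toSchwartzMap hg₂)) x • F x = ∫ x, (𝓕 (hg₁.toSchwartzMap hg₂)) x • f x := by
      apply integral_congr_ae
      filter_upwards [h2.coeFn_toLp] with x hx
      rw [hx]
    rw [e3]
    have e4 := VectorFourier.integral_fourierIntegral_smul_eq_flip (L := innerₗ E) Real.continuous_fourierChar (by exact continuous_inner) (hg₁.toSchwartzMap hg₂).integrable h1 (μ := volume) (ν := volume)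
    rw [flip_innerₗ] at e4
    simp only [SchwartzMap.fourier_coe]
    refine e4.trans ?_
    apply integral_congr_ae
    filter_upwards with x
    simp
    left; rfl
  rw [← eLpNorm_congr_ae key]
  have := Lp.norm_fourier_eq F
  rw [Lp.norm_def, Lp.norm_def, ENNReal.toReal_eq_toReal_iff' (Lp.memLp _).eLpNorm_ne_top (Lp.memLp _).eLpNorm_ne_top] at this
  rw [this]
  exact eLpNorm_congr_ae h2.coeFn_toLp

def schA (d : ℕ) (t : ℝ) : ℝ := (4 * π * |t|) ^ (-(d : ℝ) / 2)

lemma schA_pos (d : ℕ) {t : ℝ} (ht : t ≠ 0) : 0 < schA d t := by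
  unfold schA; have := abs_pos.2 ht; positivity

lemma norm_schconst (d : ℕ) {t : ℝ} (ht : t ≠ 0) :
    ‖(4 * (Real.pi : ℂ) * Complex.I * (t : ℂ)) ^ (-(d : ℂ) / 2)‖ = schA d t := by
  have h0 : (4 * (Real.pi : ℂ) * Complex.I * (t : ℂ)) ≠ 0 := by
    simp [ht, Real.pi_ne_zero]
  have : (-(d : ℂ) / 2) = ((-(d : ℝ) / 2 : ℝ) : ℂ) := by push_cast; rfl
  rw [this, Complex.norm_cpow_real, schA]
  simp [abs_of_pos Real.pi_pos]

lemma norm_exp_I (a t : ℝ) : ‖Complex.exp (Complex.I * (a : ℂ) / (4 * (t : ℂ)))‖ = 1 := by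
  have : Complex.I * (a : ℂ) / (4 * (t : ℂ)) = ((a / (4 * t) : ℝ) : ℂ) * Complex.I := by
    push_cast; ring
  rw [this, Complex.norm_exp_ofReal_mul_I]

section
variable {d : ℕ} {t : ℝ} {f : EuclideanSpace ℝ (Fin d) → ℂ}

lemma sch_integrable (x : EuclideanSpace ℝ (Fin d)) :
    Integrable (fun y => Complex.exp (Complex.I * ((‖x - y‖ ^ 2 : ℝ) : ℂ) / (4 * (t : ℂ))) * f y)
      ↔ Integrable f := by
  have hm : ∀ s : ℝ, Continuous (fun y : EuclideanSpace ℝ (Fin d) => Complex.exp (Complex.I * ((‖x - y‖ ^ 2 : ℝ) : ℂ) / (4 * (s : ℂ)))) := by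
    intro s; fun_prop
  constructor
  · intro h
    have := h.bdd_mul (c := 1) (hm (-t)).aestronglyMeasurable (by
      filter_upwards with y; rw [norm_exp_I])
    refine this.congr ?_
    filter_upwards with y
    rw [← mul_assoc, ← Complex.exp_add]
    have : Complex.I * ((‖x - y‖ ^ 2 : ℝ) : ℂ) / (4 * ((-t : ℝ) : ℂ)) + Complex.I * ((‖x - y‖ ^ 2 : ℝ) : ℂ) / (4 * (t : ℂ)) = 0 := by
      push_cast; rw [mul_neg, div_neg]; ring
    rw [this]; simp
  · intro h
    exact h.bdd_mul (c := 1) (hm t).aestronglyMeasurable (by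
      filter_upwards with y; rw [norm_exp_I])

lemma schrod_Linf (ht : t ≠ 0) (x : EuclideanSpace ℝ (Fin d)) :
    ‖schrod d t f x‖ₑ ≤ ENNReal.ofReal (schA d t) * ∫⁻ y, ‖f y‖ₑ := by
  simp only [schrod, if_neg ht]
  rw [enorm_mul, ← ofReal_norm, norm_schconst d ht]
  gcongr
  refine (enorm_integral_le_lintegral_enorm _).trans ?_
  refine lintegral_mono fun y => ?_
  rw [enorm_mul, ← ofReal_norm (Complex.exp _), norm_exp_I]
  simp

open FourierTransform in
lemma schrod_fourier (ht : t ≠ 0) (x : EuclideanSpace ℝ (Fin d)) :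
    ‖schrod d t f x‖ₑ = ENNReal.ofReal (schA d t) *
      ‖𝓕 (fun y => Complex.exp (Complex.I * ((‖y‖ ^ 2 : ℝ) : ℂ) / (4 * (t : ℂ))) * f y)
        ((4 * π * t)⁻¹ • x)‖ₑ := by
  simp only [schrod, if_neg ht]
  rw [enorm_mul, ← ofReal_norm, norm_schconst d ht]
  congr 1
  have : (∫ y, Complex.exp (Complex.I * ((‖x - y‖ ^ 2 : ℝ) : ℂ) / (4 * (t : ℂ))) * f y) =
     Complex.exp (Complex.I * ((‖x‖ ^ 2 : ℝ) : ℂ) / (4 * (t : ℂ))) *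
     𝓕 (fun y => Complex.exp (Complex.I * ((‖y‖ ^ 2 : ℝ) : ℂ) / (4 * (t : ℂ))) * f y)
        ((4 * π * t)⁻¹ • x) := by
    rw [Real.fourier_eq', ← integral_const_mul]
    congr 1
    ext y
    rw [smul_eq_mul, ← mul_assoc, ← mul_assoc, ← Complex.exp_add, ← Complex.exp_add]
    congr 2
    rw [norm_sub_sq_real, inner_smul_right, real_inner_comm]
    push_cast
    have : (t : ℂ) ≠ 0 := by exact_mod_cast ht
    have hp : (π : ℂ) ≠ 0 := by exact_mod_cast Real.pi_ne_zero
    field_simp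
    ring
  rw [this, enorm_mul, ← ofReal_norm (Complex.exp _), norm_exp_I]
  simp

lemma schrod_L2 (ht : t ≠ 0) (hf : Integrable f) :
    ∫⁻ x, ‖schrod d t f x‖ₑ ^ 2 ≤ ∫⁻ x, ‖f x‖ₑ ^ 2 := by
  by_cases hfin : ∫⁻ x, ‖f x‖ₑ ^ 2 = ∞
  · rw [hfin]; exact le_top
  set g := (fun y => Complex.exp (Complex.I * ((‖y‖ ^ 2 : ℝ) : ℂ) / (4 * (t : ℂ))) * f y) with hg
  have hgi : Integrable g := by
    have := (sch_integrable (t := t) (f := f) 0).2 hf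
    simpa [hg] using this
  have hgn : ∀ y, ‖g y‖ₑ = ‖f y‖ₑ := by
    intro y
    rw [hg]; simp only
    rw [enorm_mul, ← ofReal_norm (Complex.exp _), norm_exp_I]
    simp
  have sq : ∀ h : EuclideanSpace ℝ (Fin d) → ℂ, (eLpNorm h 2 volume) ^ 2 = ∫⁻ x, ‖h x‖ₑ ^ 2 := by
    intro h
    have := eLpNorm_nnreal_pow_eq_lintegral (f := h) (μ := volume) (p := 2) (by norm_num)
    simpa using this
  have hgm : MemLp g 2 volume := by
    refine ⟨hgi.1, ?_⟩
    have : (eLpNorm g 2 volume) ^ 2 ≠ ∞ := by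
      rw [sq]; simpa [hgn] using hfin
    rw [lt_top_iff_ne_top]
    intro h; rw [h] at this; simp at this
  have pl := plancherel_aux g hgi hgm
  have pl2 : ∫⁻ x, ‖FourierTransform.fourier g x‖ₑ ^ 2 = ∫⁻ x, ‖f x‖ₑ ^ 2 := by
    rw [← sq, pl, sq]; simp [hgn]
  have ha : (4 * π * t)⁻¹ ≠ 0 := by simp [ht, Real.pi_ne_zero]
  have e1 : ∫⁻ x, ‖schrod d t f x‖ₑ ^ 2 = ENNReal.ofReal (schA d t) ^ 2 *
      ∫⁻ x, ‖FourierTransform.fourier g ((4 * π * t)⁻¹ • x)‖ₑ ^ 2 := by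
    rw [← lintegral_const_mul']
    · congr 1; ext x; rw [schrod_fourier ht, mul_pow]
    · simp
  have e2 : ∫⁻ x, ‖FourierTransform.fourier g ((4 * π * t)⁻¹ • x)‖ₑ ^ 2 =
     ENNReal.ofReal |((4 * π * t)⁻¹ ^ d)⁻¹| * ∫⁻ x, ‖FourierTransform.fourier g x‖ₑ ^ 2 := by
    have h1 := Measure.map_addHaar_smul (volume : Measure (EuclideanSpace ℝ (Fin d))) ha
    have h2 := (Homeomorph.smulOfNeZero _ ha).measurableEmbedding.lintegral_map (μ := (volume : Measure (EuclideanSpace ℝ (Fin d)))) (fun x => ‖FourierTransform.fourier g x‖ₑ ^ 2)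
    simp only [Homeomorph.smulOfNeZero_apply] at h2
    rw [← h2, h1, lintegral_smul_measure, smul_eq_mul]
    simp
  rw [e1, e2, pl2, ← mul_assoc]
  have : ENNReal.ofReal (schA d t) ^ 2 * ENNReal.ofReal |((4 * π * t)⁻¹ ^ d)⁻¹| = 1 := by
    have hA := schA_pos d ht
    rw [← ENNReal.ofReal_pow hA.le, ← ENNReal.ofReal_mul (by positivity), ENNReal.ofReal_eq_one]
    have hx : 0 < 4 * π * |t| := by have := abs_pos.2 ht; positivity
    have : |((4 * π * t)⁻¹ ^ d)⁻¹| = (4 * π * |t|) ^ d := by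
      rw [inv_pow, inv_inv, abs_pow]; congr 1
      rw [abs_mul, abs_of_pos (by positivity : 0 < 4 * π)]
    rw [this, schA, ← Real.rpow_natCast, ← Real.rpow_natCast, ← Real.rpow_mul hx.le, ← Real.rpow_add hx]
    push_cast
    rw [show (-(d:ℝ) / 2 * 2 + d) = 0 by ring, Real.rpow_zero]
  rw [this, one_mul]
end

section rea
variable {α : Type*} [MeasurableSpace α] {ν : Measure α} {g : α → ℝ≥0∞}

def rea (ν : Measure α) (g : α → ℝ≥0∞) (τ : ℝ≥0∞) : ℝ≥0∞ := sInf {s | ν {x | s < g x} ≤ τ}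

lemma dist_rea_le (τ : ℝ≥0∞) : ν {x | rea ν g τ < g x} ≤ τ := by
  have hne : {s | ν {x | s < g x} ≤ τ}.Nonempty := ⟨∞, by simp⟩
  obtain ⟨u, hu, hlim, hmem⟩ := exists_seq_tendsto_sInf hne (OrderBot.bddBelow _)
  have : {x | rea ν g τ < g x} = ⋃ n, {x | u n < g x} := by
    ext x
    simp only [mem_ofPred_eq, mem_iUnion]
    constructor
    · intro h
      exact (hlim.eventually (gt_mem_nhds h)).exists
    · rintro ⟨n, hn⟩
      exact lt_of_le_of_lt (sInf_le (hmem n)) hn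
  rw [this, Monotone.measure_iUnion]
  · exact iSup_le fun n => hmem n
  · intro m n hmn x hx
    exact lt_of_le_of_lt (hu hmn) hx

lemma lt_rea_iff {s τ : ℝ≥0∞} : s < rea ν g τ ↔ τ < ν {x | s < g x} := by
  constructor
  · intro h
    by_contra! h2
    exact absurd (sInf_le (a := s) h2) (not_le.2 h)
  · intro h
    by_contra! h2
    refine absurd ?_ (not_le.2 h)
    refine (measure_mono ?_).trans (dist_rea_le (ν := ν) (g := g) τ)
    intro x hx
    exact lt_of_le_of_lt h2 hx

lemma rea_le {s τ : ℝ≥0∞} (h : ν {x | s < g x} ≤ τ) : rea ν g τ ≤ s := sInf_le h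

lemma rea_anti : Antitone (rea ν g) := by
  intro a b h
  exact sInf_le_sInf fun s hs => le_trans hs h

lemma lintegral_pow_lt {a : ℝ} (ha : 0 < a) (M : ℝ≥0∞) :
    ENNReal.ofReal a * ∫⁻ τ in Ioi (0:ℝ), ({τ : ℝ | ENNReal.ofReal τ < M}.indicator 1 τ) * ENNReal.ofReal (τ ^ (a - 1))
      = M ^ a := by
  have fin : ∀ m : ℝ, 0 ≤ m → ENNReal.ofReal a * ∫⁻ τ in Ioi (0:ℝ), ({τ : ℝ | ENNReal.ofReal τ < ENNReal.ofReal m}.indicator 1 τ) * ENNReal.ofReal (τ ^ (a - 1))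
      = (ENNReal.ofReal m) ^ a := by
    intro m hm
    have := lintegral_rpow_eq_lintegral_meas_lt_mul (Measure.dirac (0:ℝ)) (f := fun _ => m) (by filter_upwards with x using hm) (by fun_prop) ha
    rw [lintegral_const, measure_univ, mul_one, ← ENNReal.ofReal_rpow_of_nonneg hm ha.le] at this
    rw [this]
    congr 1
    refine setLIntegral_congr_fun measurableSet_Ioi ?_
    intro τ hτ
    simp only
    congr 1
    by_cases h : τ < m
    · have h' : ENNReal.ofReal τ < ENNReal.ofReal m := (ENNReal.ofReal_lt_ofReal_iff (lt_trans hτ h)).2 h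
      simp [h, h']
    · have h' : ¬ ENNReal.ofReal τ < ENNReal.ofReal m := by
        rw [not_lt] at h ⊢; exact ENNReal.ofReal_le_ofReal h
      simp [h, h']
  by_cases hM : M = ∞
  · subst hM
    rw [ENNReal.top_rpow_of_pos ha, eq_top_iff]
    refine le_of_forall_lt fun c hc => ?_
    obtain ⟨m, hm⟩ : ∃ m : ℝ, 0 ≤ m ∧ c < (ENNReal.ofReal m) ^ a := by
      refine ⟨((c + 1) ^ (1/a)).toReal, ENNReal.toReal_nonneg, ?_⟩
      rw [ENNReal.ofReal_toReal, ← ENNReal.rpow_mul, one_div_mul_cancel ha.ne', ENNReal.rpow_one]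
      · exact ENNReal.lt_add_right hc.ne (by simp)
      · exact ENNReal.rpow_ne_top_of_nonneg (by positivity) (by simp [hc.ne])
    refine hm.2.trans_le ?_
    rw [← fin m hm.1]
    gcongr
    exact le_top
  · have := fin M.toReal ENNReal.toReal_nonneg
    rwa [ENNReal.ofReal_toReal hM] at this

def reaG (ν : Measure α) (g : α → ℝ≥0∞) (p : ℝ) (x : ℝ) : ℝ≥0∞ :=
  ENNReal.ofReal (Real.exp (x / p)) * rea ν g (ENNReal.ofReal (Real.exp x))

lemma lintegral_exp (h : ℝ → ℝ≥0∞) :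
    ∫⁻ τ in Ioi (0:ℝ), h τ = ∫⁻ x : ℝ, ENNReal.ofReal (Real.exp x) * h (Real.exp x) := by
  have := lintegral_image_eq_lintegral_abs_deriv_mul (s := univ) MeasurableSet.univ
    (fun x _ => (Real.hasDerivAt_exp x).hasDerivWithinAt) Real.exp_injective.injOn h
  rw [image_univ, Real.range_exp] at this
  rw [this, Measure.restrict_univ]
  simp

lemma dist_anti : Antitone (fun s => ν {x | s < g x}) := by
  intro a b h
  exact measure_mono fun x hx => lt_of_le_of_lt h hx

lemma lor_fin {p : ℝ} (hp : 0 < p) {θ : ℝ≥0∞} (hθ : 1 ≤ θ) (hθ' : θ ≠ ∞) :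
    lorentzNorm ν (ENNReal.ofReal p) θ g = (∫⁻ x, reaG ν g p x ^ θ.toReal) ^ (1 / θ.toReal) := by
  have hq : 0 < θ.toReal := ENNReal.toReal_pos (by positivity) hθ'
  set q := θ.toReal with hqd
  have hqp : 0 < q / p := by positivity
  have hmD : Measurable (fun l : ℝ => ν {x | ENNReal.ofReal l < g x}) :=
    dist_anti.measurable.comp ENNReal.measurable_ofReal
  have hmR : Measurable (fun l : ℝ => rea ν g (ENNReal.ofReal l)) :=
    rea_anti.measurable.comp ENNReal.measurable_ofReal
  rw [lorentzNorm, if_neg hθ']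
  simp only [ENNReal.toReal_inv, ENNReal.toReal_ofReal hp.le, ← hqd, one_div]
  congr 1
  have e1 : ∫⁻ x, reaG ν g p x ^ q = ∫⁻ τ in Ioi (0:ℝ), ENNReal.ofReal (τ ^ (q / p - 1)) * rea ν g (ENNReal.ofReal τ) ^ q := by
    rw [lintegral_exp]
    congr 1
    ext x
    rw [reaG, ENNReal.mul_rpow_of_nonneg _ _ hq.le, ← mul_assoc]
    congr 1
    rw [ENNReal.ofReal_rpow_of_nonneg (by positivity) hq.le, ← ENNReal.ofReal_mul (by positivity), ← Real.exp_mul, ← Real.exp_mul, ← Real.exp_add]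
    congr 2
    field_simp
    ring
  rw [e1]
  have e2 : ∫⁻ l in Ioi (0:ℝ), (ENNReal.ofReal l * ν {x | ENNReal.ofReal l < g x} ^ p⁻¹) ^ q / ENNReal.ofReal l
     = ∫⁻ l in Ioi (0:ℝ), ENNReal.ofReal (q / p) * ∫⁻ τ in Ioi (0:ℝ), ENNReal.ofReal (l ^ (q - 1)) * ({z : ℝ × ℝ | ENNReal.ofReal z.2 < ν {x | ENNReal.ofReal z.1 < g x}}.indicator 1 (l, τ)) * ENNReal.ofReal (τ ^ (q / p - 1)) := by
    refine setLIntegral_congr_fun measurableSet_Ioi ?_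
    intro l hl
    simp only
    have hl : 0 < l := hl
    have := lintegral_pow_lt hqp (ν {x | ENNReal.ofReal l < g x})
    rw [ENNReal.mul_rpow_of_nonneg _ _ hq.le, ← ENNReal.rpow_mul, inv_mul_eq_div, ← this]
    simp_rw [mul_assoc]
    rw [lintegral_const_mul' _ _ (by simp)]
    have : ENNReal.ofReal (l ^ (q - 1)) = ENNReal.ofReal l ^ q / ENNReal.ofReal l := by
      rw [ENNReal.ofReal_rpow_of_pos hl, Real.rpow_sub_one hl.ne', ENNReal.ofReal_div_of_pos hl]
    rw [this, ENNReal.div_eq_inv_mul, ENNReal.div_eq_inv_mul]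
    simp only [indicator, Pi.one_apply, mem_ofPred_eq]
    ring
  have hms : MeasurableSet {z : ℝ × ℝ | ENNReal.ofReal z.2 < ν {x | ENNReal.ofReal z.1 < g x}} :=
    measurableSet_lt (ENNReal.measurable_ofReal.comp measurable_snd) (hmD.comp measurable_fst)
  rw [e2, lintegral_const_mul' _ _ (by simp), lintegral_lintegral_swap]
  · rw [← mul_assoc, ← ENNReal.ofReal_mul hp.le, mul_div_cancel₀ _ hp.ne', ← lintegral_const_mul' _ _ (by simp)]
    refine setLIntegral_congr_fun measurableSet_Ioi ?_
    intro τ hτ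
    simp only
    rw [← lintegral_pow_lt hq (rea ν g (ENNReal.ofReal τ)), mul_left_comm]
    congr 1
    rw [← lintegral_const_mul' _ _ (by simp)]
    congr 1
    ext l
    simp only [indicator, Pi.one_apply, mem_ofPred_eq, lt_rea_iff]
    ring
  · refine Measurable.aemeasurable ?_
    refine Measurable.mul (Measurable.mul ?_ ?_) ?_
    · fun_prop
    · exact (measurable_one.indicator hms)
    · fun_prop

lemma lor_top {p : ℝ} (hp : 0 < p) :
    lorentzNorm ν (ENNReal.ofReal p) ∞ g = ⨆ x, reaG ν g p x := by
  have key : ∀ l : ℝ, 0 < l → ∀ x : ℝ, ENNReal.ofReal l < rea ν g (ENNReal.ofReal (Real.exp x)) ↔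
    ENNReal.ofReal (Real.exp x) < ν {x | ENNReal.ofReal l < g x} := fun l hl x => lt_rea_iff
  have ex : ∀ x : ℝ, ENNReal.ofReal (Real.exp (x / p)) = ENNReal.ofReal (Real.exp x) ^ p⁻¹ := by
    intro x
    rw [ENNReal.ofReal_rpow_of_pos (by positivity), ← Real.exp_mul]; rfl
  rw [lorentzNorm, if_pos rfl, ENNReal.toReal_inv, ENNReal.toReal_ofReal hp.le]
  apply le_antisymm
  · refine iSup₂_le fun l hl => ?_
    have hl : 0 < l := hl
    have hl' : ENNReal.ofReal l ≠ 0 := by simpa using hl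
    set S := ⨆ x, reaG ν g p x
    rw [mul_comm, ← ENNReal.le_div_iff_mul_le (by simp [hl']) (by simp), ENNReal.rpow_inv_le_iff hp]
    refine le_of_forall_lt_imp_le_of_dense fun c hc => ?_
    by_cases hc0 : c = 0
    · simp [hc0]
    have hct : c ≠ ∞ := hc.ne_top
    have hcp : 0 < c.toReal := ENNReal.toReal_pos hc0 hct
    have hcx : ENNReal.ofReal (Real.exp (Real.log c.toReal)) = c := by
      rw [Real.exp_log hcp, ENNReal.ofReal_toReal hct]
    rw [← ENNReal.rpow_inv_le_iff hp, ENNReal.le_div_iff_mul_le (by simp [hl']) (by simp)]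
    refine le_trans ?_ (le_iSup _ (Real.log c.toReal))
    rw [reaG, ex, hcx]
    gcongr
    exact (lt_rea_iff.2 hc).le
  · refine iSup_le fun x => ?_
    rw [reaG]
    have h0 : ENNReal.ofReal (Real.exp (x / p)) ≠ 0 := by simpa using Real.exp_pos _
    rw [mul_comm, ← ENNReal.le_div_iff_mul_le (by simp [h0]) (by simp)]
    refine le_of_forall_lt_imp_le_of_dense fun c hc => ?_
    by_cases hc0 : c = 0
    · simp [hc0]
    have hct : c ≠ ∞ := hc.ne_top
    have hcp : 0 < c.toReal := ENNReal.toReal_pos hc0 hct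
    rw [ENNReal.le_div_iff_mul_le (by simp [h0]) (by simp)]
    refine le_trans ?_ (le_iSup₂ (f := fun (l:ℝ) (_ : l ∈ Ioi (0:ℝ)) => ENNReal.ofReal l * ν {x | ENNReal.ofReal l < g x} ^ p⁻¹) c.toReal hcp)
    rw [ENNReal.ofReal_toReal hct, ex]
    gcongr
    exact (lt_rea_iff.1 hc).le
end rea

section dec
variable {α : Type*} [MeasurableSpace α] {ν : Measure α} {g : α → ℝ≥0∞}

lemma big_part (hg : Measurable g) {τ : ℝ≥0∞} (hτ : τ ≠ ∞) :
    ∫⁻ x, {x | rea ν g τ < g x}.indicator g x ∂ν ≤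
      ∑' j : ℕ, rea ν g (τ * 2⁻¹ ^ (j + 1)) * (τ * 2⁻¹ ^ j) := by
  have hlim : Filter.Tendsto (fun j : ℕ => τ * (2⁻¹ : ℝ≥0∞) ^ j) Filter.atTop (nhds 0) := by
    have := ENNReal.Tendsto.const_mul (a := τ) (ENNReal.tendsto_pow_atTop_nhds_zero_of_lt_one (r := 2⁻¹) (by simp)) (Or.inr hτ)
    simpa using this
  have hae : ∀ᵐ x ∂ν, ∃ j : ℕ, g x ≤ rea ν g (τ * 2⁻¹ ^ j) := by
    rw [ae_iff]
    refine le_antisymm ?_ bot_le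
    refine ge_of_tendsto' hlim fun j => ?_
    refine le_trans (measure_mono ?_) (dist_rea_le (ν := ν) (g := g) (τ * 2⁻¹ ^ j))
    intro x hx
    simp only [not_exists, not_le, mem_ofPred_eq] at hx ⊢
    exact hx j
  have hpt : ∀ᵐ x ∂ν, {x | rea ν g τ < g x}.indicator g x ≤
      ∑' j : ℕ, rea ν g (τ * 2⁻¹ ^ (j + 1)) * {x | rea ν g (τ * 2⁻¹ ^ j) < g x}.indicator 1 x := by
    filter_upwards [hae] with x hx
    by_cases h : rea ν g τ < g x
    · classical
      have hn := Nat.find_spec hx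
      have hn0 : Nat.find hx ≠ 0 := by
        intro h0
        rw [h0] at hn
        simp at hn
        exact absurd h (not_lt.2 hn)
      obtain ⟨k, hk⟩ := Nat.exists_eq_succ_of_ne_zero hn0
      have hk2 := Nat.find_min hx (m := k) (by omega)
      rw [hk] at hn
      rw [not_le] at hk2
      refine le_trans ?_ (ENNReal.le_tsum k)
      rw [indicator_of_mem (by exact h), indicator_of_mem (by exact hk2)]
      simpa using hn
    · rw [indicator_of_notMem (by exact h)]; exact bot_le
  refine (lintegral_mono_ae hpt).trans ?_
  rw [lintegral_tsum]
  · refine ENNReal.tsum_le_tsum fun j => ?_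
    have hm : MeasurableSet {x | rea ν g (τ * 2⁻¹ ^ j) < g x} := measurableSet_lt measurable_const hg
    rw [lintegral_const_mul _ (measurable_one.indicator hm), lintegral_indicator_one hm]
    gcongr
    exact dist_rea_le _
  · intro j
    have hm : MeasurableSet {x | rea ν g (τ * 2⁻¹ ^ j) < g x} := measurableSet_lt measurable_const hg
    exact ((measurable_one.indicator hm).const_mul _).aemeasurable

lemma small_part (hg : Measurable g) (hD : ∀ s, s ≠ 0 → ν {x | s < g x} ≠ ∞) {τ : ℝ≥0∞} (hτ : τ ≠ 0) :
    ∫⁻ x, {x | rea ν g τ < g x}ᶜ.indicator g x ^ 2 ∂ν ≤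
      ∑' j : ℕ, rea ν g (τ * 2 ^ j) ^ 2 * (τ * 2 ^ (j + 1)) := by
  have hlim : Filter.Tendsto (fun j : ℕ => τ * (2 : ℝ≥0∞) ^ j) Filter.atTop (nhds ∞) := by
    have := ENNReal.Tendsto.const_mul (a := τ) (ENNReal.tendsto_pow_atTop_nhds_top_iff.2 (by norm_num : (1:ℝ≥0∞) < 2)) (Or.inl (by simp))
    rwa [ENNReal.mul_top hτ] at this
  have hae : ∀ x, g x ≠ 0 → ∃ j : ℕ, rea ν g (τ * 2 ^ j) < g x := by
    intro x hx
    obtain ⟨s, hs0, hs⟩ := exists_between (pos_iff_ne_zero.2 hx)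
    have := hD s hs0.ne'
    obtain ⟨j, hj⟩ := (hlim.eventually (lt_mem_nhds (lt_top_iff_ne_top.2 this))).exists
    exact ⟨j, lt_of_le_of_lt (rea_le hj.le) hs⟩
  have hpt : ∀ x, {x | rea ν g τ < g x}ᶜ.indicator g x ^ 2 ≤
      ∑' j : ℕ, rea ν g (τ * 2 ^ j) ^ 2 * {x | rea ν g (τ * 2 ^ (j + 1)) < g x}.indicator 1 x := by
    intro x
    by_cases h : rea ν g τ < g x
    · rw [indicator_of_notMem (by simpa using h)]; simp
    by_cases hx0 : g x = 0
    · have : {x | rea ν g τ < g x}ᶜ.indicator g x = 0 := by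
        simp [indicator, hx0]
      rw [this]; simp
    · classical
      have hx := hae x hx0
      have hn := Nat.find_spec hx
      have hn0 : Nat.find hx ≠ 0 := by
        intro h0
        rw [h0] at hn
        simp at hn
        exact absurd hn h
      obtain ⟨k, hk⟩ := Nat.exists_eq_succ_of_ne_zero hn0
      have hk2 := Nat.find_min hx (m := k) (by omega)
      rw [hk] at hn
      rw [not_lt] at hk2
      refine le_trans ?_ (ENNReal.le_tsum k)
      rw [indicator_of_mem (by exact h), indicator_of_mem (by exact hn)]
      simp only [Pi.one_apply, mul_one]
      gcongr
  refine (lintegral_mono hpt).trans ?_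
  rw [lintegral_tsum]
  · refine ENNReal.tsum_le_tsum fun j => ?_
    have hm : MeasurableSet {x | rea ν g (τ * 2 ^ (j+1)) < g x} := measurableSet_lt measurable_const hg
    rw [lintegral_const_mul _ (measurable_one.indicator hm), lintegral_indicator_one hm]
    gcongr
    exact dist_rea_le _
  · intro j
    have hm : MeasurableSet {x | rea ν g (τ * 2 ^ (j+1)) < g x} := measurableSet_lt measurable_const hg
    exact ((measurable_one.indicator hm).const_mul _).aemeasurable

lemma tsum_sq_le (a : ℕ → ℝ≥0∞) : ∑' j, a j ^ 2 ≤ (∑' j, a j) ^ 2 := by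
  calc ∑' j, a j ^ 2 ≤ ∑' j, a j * ∑' k, a k := by
        refine ENNReal.tsum_le_tsum fun j => ?_
        rw [sq]; gcongr; exact ENNReal.le_tsum j
    _ = _ := by rw [ENNReal.tsum_mul_right, sq]

lemma small_part' (hg : Measurable g) (hD : ∀ s, s ≠ 0 → ν {x | s < g x} ≠ ∞) {τ : ℝ≥0∞} (hτ : τ ≠ 0) :
    ∫⁻ x, {x | rea ν g τ < g x}ᶜ.indicator g x ^ 2 ∂ν ≤
      (∑' j : ℕ, rea ν g (τ * 2 ^ j) * (τ * 2 ^ (j + 1)) ^ (2⁻¹ : ℝ)) ^ 2 := by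
  refine (small_part hg hD hτ).trans (le_trans (le_of_eq ?_) (tsum_sq_le _))
  congr 1; ext j
  rw [mul_pow, ← ENNReal.rpow_mul_natCast]
  simp
end dec

section interp
variable {d : ℕ} {t : ℝ} {f : EuclideanSpace ℝ (Fin d) → ℂ}

lemma schrod_measurable (ht : t ≠ 0) (hf : Measurable f) : Measurable (schrod d t f) := by
  unfold schrod
  rw [if_neg ht]
  refine Measurable.const_mul ?_ _
  have : StronglyMeasurable (Function.uncurry fun (x y : EuclideanSpace ℝ (Fin d)) =>
     Complex.exp (Complex.I * ((‖x - y‖ ^ 2 : ℝ) : ℂ) / (4 * (t : ℂ))) * f y) := by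
    apply Measurable.stronglyMeasurable
    refine Measurable.mul ?_ (hf.comp measurable_snd)
    apply Continuous.measurable
    fun_prop
  exact (this.integral_prod_right).measurable

lemma schrod_add (ht : t ≠ 0) {f g : EuclideanSpace ℝ (Fin d) → ℂ} (hf : Integrable f) (hg : Integrable g)
    (x : EuclideanSpace ℝ (Fin d)) : schrod d t (f + g) x = schrod d t f x + schrod d t g x := by
  simp only [schrod, if_neg ht]
  rw [← mul_add, ← integral_add ((sch_integrable x).2 hf) ((sch_integrable x).2 hg)]
  simp [mul_add]

lemma schrod_rea (ht : t ≠ 0) (hf : Measurable f) (hfi : Integrable f) {τ : ℝ≥0∞} (h0 : τ ≠ 0) (h1 : τ ≠ ∞) :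
    rea volume (fun x => ‖schrod d t f x‖ₑ) (ENNReal.ofReal (schA d t) ^ 2 * τ)⁻¹ ≤
      ENNReal.ofReal (schA d t) * (∑' j : ℕ, rea volume (fun x => ‖f x‖ₑ) (τ * 2⁻¹ ^ (j + 1)) * (τ * 2⁻¹ ^ j))
      + ENNReal.ofReal (schA d t) * τ ^ (2⁻¹ : ℝ) *
        ∑' j : ℕ, rea volume (fun x => ‖f x‖ₑ) (τ * 2 ^ j) * (τ * 2 ^ (j + 1)) ^ (2⁻¹ : ℝ) := by
  have hA : ENNReal.ofReal (schA d t) ≠ 0 := by simpa using schA_pos d ht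
  have hA' : ENNReal.ofReal (schA d t) ≠ ∞ := by simp
  set A := ENNReal.ofReal (schA d t)
  have hgm : Measurable (fun x => ‖f x‖ₑ) := hf.enorm
  set B := {x | rea volume (fun x => ‖f x‖ₑ) τ < ‖f x‖ₑ} with hB
  have hBm : MeasurableSet B := measurableSet_lt measurable_const hgm
  have hD : ∀ s, s ≠ 0 → volume {x | s < ‖f x‖ₑ} ≠ ∞ := by
    intro s hs
    have : s * volume {x | s ≤ ‖f x‖ₑ} ≤ _ := mul_meas_ge_le_lintegral hgm s
    have h2 : s * volume {x | s ≤ ‖f x‖ₑ} < ∞ := lt_of_le_of_lt this hfi.2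
    have h3 := (ENNReal.lt_top_of_mul_ne_top_right h2.ne hs).ne
    refine ne_top_of_le_ne_top h3 (measure_mono fun x hx => ?_)
    have hx : s < ‖f x‖ₑ := hx
    show s ≤ ‖f x‖ₑ
    exact hx.le
  have b1 := big_part (ν := volume) hgm h1
  have b2 := small_part' (ν := volume) hgm hD h0
  set S1 := (∑' j : ℕ, rea volume (fun x => ‖f x‖ₑ) (τ * 2⁻¹ ^ (j + 1)) * (τ * 2⁻¹ ^ j))
  set S := ∑' j : ℕ, rea volume (fun x => ‖f x‖ₑ) (τ * 2 ^ j) * (τ * 2 ^ (j + 1)) ^ (2⁻¹ : ℝ)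
  have i1 : Integrable (B.indicator f) := hfi.indicator hBm
  have i2 : Integrable (Bᶜ.indicator f) := hfi.indicator hBm.compl
  have c1 : ∀ x, ‖schrod d t (B.indicator f) x‖ₑ ≤ A * S1 := by
    intro x
    refine (schrod_Linf ht x).trans ?_
    gcongr
    refine le_trans (le_of_eq ?_) b1
    congr 1; ext y
    rw [enorm_indicator_eq_indicator_enorm]
  have c2 : ∫⁻ x, ‖schrod d t (Bᶜ.indicator f) x‖ₑ ^ 2 ≤ S ^ 2 := by
    refine (schrod_L2 ht i2).trans (le_trans (le_of_eq ?_) b2)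
    congr 1; ext y
    rw [enorm_indicator_eq_indicator_enorm]
  have hm2 : Measurable (fun x => ‖schrod d t (Bᶜ.indicator f) x‖ₑ ^ 2) :=
    (schrod_measurable ht (hf.indicator hBm.compl)).enorm.pow_const 2
  apply rea_le
  have hsub : {x | A * S1 + A * τ ^ (2⁻¹ : ℝ) * S < ‖schrod d t f x‖ₑ} ⊆
      {x | A * τ ^ (2⁻¹ : ℝ) * S < ‖schrod d t (Bᶜ.indicator f) x‖ₑ} := by
    intro x hx
    have hx : A * S1 + A * τ ^ (2⁻¹ : ℝ) * S < ‖schrod d t f x‖ₑ := hx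
    have e : schrod d t f x = schrod d t (B.indicator f) x + schrod d t (Bᶜ.indicator f) x := by
      rw [← schrod_add ht i1 i2, indicator_self_add_compl]
    rw [e] at hx
    have := hx.trans_le ((enorm_add_le _ _).trans (add_le_add_left (c1 x) _))
    exact lt_of_add_lt_add_left this
  refine (measure_mono hsub).trans ?_
  by_cases hS0 : S = 0
  · rw [hS0] at c2 ⊢
    have : ∫⁻ x, ‖schrod d t (Bᶜ.indicator f) x‖ₑ ^ 2 = 0 := by simpa using c2
    rw [lintegral_eq_zero_iff hm2] at this
    refine le_trans (le_of_eq ?_) bot_le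
    rw [Filter.EventuallyEq, ae_iff] at this
    refine measure_mono_null ?_ this
    intro x hx
    simp at hx ⊢
    exact hx
  by_cases hSt : S = ∞
  · rw [hSt, ENNReal.mul_top (by simp [hA, h0, h1])]
    simp
  have ch := mul_meas_ge_le_lintegral (μ := volume) hm2 ((A * τ ^ (2⁻¹ : ℝ) * S) ^ 2)
  have ch2 : (A * τ ^ (2⁻¹ : ℝ) * S) ^ 2 * volume {x | A * τ ^ (2⁻¹ : ℝ) * S < ‖schrod d t (Bᶜ.indicator f) x‖ₑ} ≤ S ^ 2 := by
    refine le_trans ?_ (ch.trans c2)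
    gcongr with x
    intro hx
    gcongr
  have ex : (A * τ ^ (2⁻¹ : ℝ) * S) ^ 2 = S ^ 2 * (A ^ 2 * τ) := by
    rw [mul_pow, mul_pow, ← ENNReal.rpow_mul_natCast τ]
    simp; ring
  rw [ex, mul_assoc] at ch2
  rw [ENNReal.le_inv_iff_mul_le, mul_comm]
  rw [← ENNReal.mul_le_mul_iff_right (a := S ^ 2) (by simpa using hS0) (by simp [hSt]), mul_one]
  exact ch2
end interp

section final
lemma jensen_tsum {ι : Type*} (w x : ι → ℝ≥0∞) {q : ℝ} (hq : 1 ≤ q) :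
    (∑' i, w i * x i) ^ q ≤ (∑' i, w i) ^ (q - 1) * ∑' i, w i * x i ^ q := by
  have hq0 : 0 < q := by linarith
  rw [← ENNReal.le_rpow_inv_iff hq0, ENNReal.tsum_eq_iSup_sum (f := fun i => w i * x i)]
  refine iSup_le fun s => ?_
  refine (ENNReal.inner_le_weight_mul_Lp_of_nonneg s hq w x).trans ?_
  rw [ENNReal.mul_rpow_of_nonneg _ _ (by positivity), ← ENNReal.rpow_mul]
  have : (q - 1) * q⁻¹ = 1 - q⁻¹ := by field_simp
  rw [this]
  have : 0 ≤ 1 - q⁻¹ := by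
    have := inv_le_one_of_one_le₀ hq; linarith
  gcongr
  · exact ENNReal.sum_le_tsum s
  · exact ENNReal.sum_le_tsum (f := fun i => w i * x i ^ q) s

lemma conv_fin {ι : Type*} [Countable ι] {H G : ℝ → ℝ≥0∞} (hG : Measurable G) (w : ι → ℝ≥0∞) (b : ι → ℝ)
    (c : ℝ) (K : ℝ≥0∞) (h : ∀ x, H (c - x) ≤ K * ∑' i, w i * G (x + b i)) {q : ℝ} (hq : 1 ≤ q) (hK : K ≠ ∞)
    (hW : ∑' i, w i ≠ ∞) :
    (∫⁻ x, H x ^ q) ^ (1 / q) ≤ K * (∑' i, w i) * (∫⁻ x, G x ^ q) ^ (1 / q) := by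
  have hq0 : 0 < q := by linarith
  have hw : ∀ i, w i ≠ ∞ := fun i => ne_top_of_le_ne_top hW (ENNReal.le_tsum i)
  rw [one_div, ENNReal.rpow_inv_le_iff hq0, ENNReal.mul_rpow_of_nonneg _ _ hq0.le, ← ENNReal.rpow_mul,
    inv_mul_cancel₀ hq0.ne', ENNReal.rpow_one]
  have e1 : ∫⁻ x, H x ^ q = ∫⁻ x, H (c - x) ^ q := by
    rw [lintegral_sub_left_eq_self (fun x => H x ^ q) c]
  rw [e1]
  calc ∫⁻ x, H (c - x) ^ q ≤ ∫⁻ x, K ^ q * ((∑' i, w i) ^ (q - 1) * ∑' i, w i * G (x + b i) ^ q) := by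
        refine lintegral_mono fun x => ?_
        refine (ENNReal.rpow_le_rpow (h x) hq0.le).trans ?_
        rw [ENNReal.mul_rpow_of_nonneg _ _ hq0.le]
        gcongr
        exact jensen_tsum _ _ hq
    _ = K ^ q * ((∑' i, w i) ^ (q - 1) * ∑' i, w i * ∫⁻ x, G x ^ q) := by
        rw [lintegral_const_mul' _ _ (ENNReal.rpow_ne_top_of_nonneg hq0.le hK),
          lintegral_const_mul' _ _ (ENNReal.rpow_ne_top_of_nonneg (by linarith) hW), lintegral_tsum]
        · congr 3; ext i
          rw [lintegral_const_mul' _ _ (hw i), lintegral_add_right_eq_self (fun x => G x ^ q)]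
        · intro i
          exact (((hG.comp (measurable_add_const (b i))).pow_const q).const_mul _).aemeasurable
    _ = _ := by
        rw [ENNReal.tsum_mul_right, ENNReal.mul_rpow_of_nonneg _ _ hq0.le, mul_assoc, ← mul_assoc (_ ^ (q-1))]
        congr 2
        by_cases h0 : ∑' i, w i = 0
        · rw [h0]; simp [hq0]
        conv_rhs => rw [show q = (q - 1) + 1 by ring]
        rw [ENNReal.rpow_add _ _ h0 hW, ENNReal.rpow_one]

lemma conv_top {ι : Type*} {H G : ℝ → ℝ≥0∞} (w : ι → ℝ≥0∞) (b : ι → ℝ)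
    (c : ℝ) (K : ℝ≥0∞) (h : ∀ x, H (c - x) ≤ K * ∑' i, w i * G (x + b i)) :
    (⨆ x, H x) ≤ K * (∑' i, w i) * (⨆ x, G x) := by
  refine iSup_le fun x => ?_
  have := h (c - x)
  rw [sub_sub_cancel] at this
  refine this.trans ?_
  rw [mul_assoc, ← ENNReal.tsum_mul_right]
  gcongr with i
  exact le_iSup G _

/-- weights -/
def wt (r p : ℝ) : ℕ ⊕ ℕ → ℝ≥0∞ := Sum.elim
  (fun j => ENNReal.ofReal (Real.exp (Real.log 2 / p) * Real.exp (-(Real.log 2 / r)) ^ j))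
  (fun j => ENNReal.ofReal (Real.exp (Real.log 2 / 2) * Real.exp (-(Real.log 2 * (1 / p - 1 / 2))) ^ j))

def sh : ℕ ⊕ ℕ → ℝ := Sum.elim (fun j => - ((j + 1) * Real.log 2)) (fun j => j * Real.log 2)

lemma wt_sum {r p : ℝ} (hr : 0 < r) (hp : 1 / 2 < 1 / p) : ∑' i, wt r p i ≠ ∞ := by
  have hl : 0 < Real.log 2 := Real.log_pos (by norm_num)
  have geo : ∀ c a : ℝ, 0 ≤ c → 0 < a → ∑' j : ℕ, ENNReal.ofReal (c * Real.exp (-a) ^ j) ≠ ∞ := by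
    intro c a hc ha
    apply Summable.tsum_ofReal_ne_top
    exact (summable_geometric_of_lt_one (by positivity) (by simpa using ha)).mul_left c
  rw [Summable.tsum_sum ENNReal.summable ENNReal.summable]
  simp only [wt, Sum.elim_inl, Sum.elim_inr]
  exact ENNReal.add_ne_top.2 ⟨geo _ _ (by positivity) (by positivity), geo _ _ (by positivity)
    (mul_pos hl (by linarith))⟩

lemma ofReal_exp_half (x : ℝ) : ENNReal.ofReal (Real.exp x) ^ (2⁻¹ : ℝ) = ENNReal.ofReal (Real.exp (x / 2)) := by
  rw [ENNReal.ofReal_rpow_of_pos (by positivity), ← Real.exp_mul]; rfl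

lemma two_pow_eq (j : ℕ) : (2 : ℝ≥0∞) ^ j = ENNReal.ofReal (Real.exp (j * Real.log 2)) := by
  rw [Real.exp_nat_mul, Real.exp_log (by norm_num), ENNReal.ofReal_pow (by norm_num)]; simp

lemma two_inv_pow_eq (j : ℕ) : (2⁻¹ : ℝ≥0∞) ^ j = ENNReal.ofReal (Real.exp (-(j * Real.log 2))) := by
  rw [← ENNReal.inv_pow, two_pow_eq, ← ENNReal.ofReal_inv_of_pos (by positivity), Real.exp_neg]

lemma schrod_G {d : ℕ} {t : ℝ} {f : EuclideanSpace ℝ (Fin d) → ℂ} (ht : t ≠ 0) (hf : Measurable f)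
    (hfi : Integrable f) {r p : ℝ} (hrp : 1 / r + 1 / p = 1) (x : ℝ) :
    reaG volume (fun x => ‖schrod d t f x‖ₑ) r (-2 * Real.log (schA d t) - x) ≤
      ENNReal.ofReal (schA d t ^ (1 - 2 / r)) * ∑' i, wt r p i *
        reaG volume (fun x => ‖f x‖ₑ) p (x + sh i) := by
  have hA := schA_pos d ht
  set A := schA d t with hAd
  have hAe : A = Real.exp (Real.log A) := (Real.exp_log hA).symm
  set a := Real.log A with had
  have key := schrod_rea ht hf hfi (τ := ENNReal.ofReal (Real.exp x)) (by simpa using Real.exp_pos x) (by simp)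
  rw [← hAd] at key
  rw [Summable.tsum_sum ENNReal.summable ENNReal.summable]
  simp only [wt, sh, Sum.elim_inl, Sum.elim_inr]
  have harg : (ENNReal.ofReal A ^ 2 * ENNReal.ofReal (Real.exp x))⁻¹ = ENNReal.ofReal (Real.exp (-2 * a - x)) := by
    rw [hAe, ← ENNReal.ofReal_pow (by positivity), ← ENNReal.ofReal_mul (by positivity), ← ENNReal.ofReal_inv_of_pos (by positivity),
      ← Real.exp_nat_mul, ← Real.exp_add, ← Real.exp_neg]
    congr 2; push_cast; ring
  rw [harg] at key
  have hKe : A ^ (1 - 2 / r) = Real.exp (a * (1 - 2 / r)) := by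
    rw [hAe, ← Real.exp_mul]
  have h1r : 1 / p = 1 - 1 / r := by linarith
  unfold reaG
  refine (mul_le_mul_right key _).trans ?_
  rw [mul_add, mul_add]
  refine add_le_add (le_of_eq ?_) (le_of_eq ?_)
  · rw [← ENNReal.tsum_mul_left, ← ENNReal.tsum_mul_left, ← ENNReal.tsum_mul_left]
    congr 1; ext j
    rw [two_inv_pow_eq, two_inv_pow_eq, ← ENNReal.ofReal_mul (by positivity), ← ENNReal.ofReal_mul (by positivity), ← Real.exp_add, ← Real.exp_add,
      hKe, hAe]
    push_cast
    set R := rea volume (fun x => ‖f x‖ₑ) (ENNReal.ofReal (Real.exp (x + -((j + 1) * Real.log 2))))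
    have : ∀ u v w z y k : ℝ, Real.exp u * Real.exp v * Real.exp w = Real.exp z * Real.exp y * Real.exp k →
      ENNReal.ofReal (Real.exp u) * (ENNReal.ofReal (Real.exp v) * (R * ENNReal.ofReal (Real.exp w))) =
      ENNReal.ofReal (Real.exp z) * (ENNReal.ofReal (Real.exp y) * (ENNReal.ofReal (Real.exp k) * R)) := by
      intro u v w z y k h
      have h' := congrArg ENNReal.ofReal h
      simp only [ENNReal.ofReal_mul (Real.exp_pos _).le, ENNReal.ofReal_mul (mul_pos (Real.exp_pos _) (Real.exp_pos _)).le] at h'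
      calc _ = (ENNReal.ofReal (Real.exp u) * ENNReal.ofReal (Real.exp v) * ENNReal.ofReal (Real.exp w)) * R := by ring
        _ = _ := by rw [h']; ring
    rw [← Real.exp_nat_mul, ← Real.exp_add]
    apply this
    simp only [← Real.exp_add]
    congr 1
    have e : ∀ y, y / p = y * (1 - 1 / r) := by intro y; rw [← h1r]; ring
    rw [e, e]
    ring
  · rw [← ENNReal.tsum_mul_left, ← ENNReal.tsum_mul_left, ← ENNReal.tsum_mul_left]
    congr 1; ext j
    rw [two_pow_eq, two_pow_eq, ← ENNReal.ofReal_mul (by positivity), ← ENNReal.ofReal_mul (by positivity), ← Real.exp_add, ← Real.exp_add,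
      hKe, hAe, ofReal_exp_half, ofReal_exp_half, ← ENNReal.ofReal_mul (by positivity), ← Real.exp_add]
    push_cast
    set R := rea volume (fun x => ‖f x‖ₑ) (ENNReal.ofReal (Real.exp (x + j * Real.log 2)))
    have : ∀ u v w z y k : ℝ, Real.exp u * Real.exp v * Real.exp w = Real.exp z * Real.exp y * Real.exp k →
      ENNReal.ofReal (Real.exp u) * (ENNReal.ofReal (Real.exp v) * (R * ENNReal.ofReal (Real.exp w))) =
      ENNReal.ofReal (Real.exp z) * (ENNReal.ofReal (Real.exp y) * (ENNReal.ofReal (Real.exp k) * R)) := by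
      intro u v w z y k h
      have h' := congrArg ENNReal.ofReal h
      simp only [ENNReal.ofReal_mul (Real.exp_pos _).le, ENNReal.ofReal_mul (mul_pos (Real.exp_pos _) (Real.exp_pos _)).le] at h'
      calc _ = (ENNReal.ofReal (Real.exp u) * ENNReal.ofReal (Real.exp v) * ENNReal.ofReal (Real.exp w)) * R := by ring
        _ = _ := by rw [h']; ring
    rw [← Real.exp_nat_mul, ← Real.exp_add]
    apply this
    simp only [← Real.exp_add]
    congr 1
    have e : ∀ y, y / p = y * (1 - 1 / r) := by intro y; rw [← h1r]; ring
    rw [h1r, e]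
    ring

lemma reaG_meas {α : Type*} [MeasurableSpace α] {ν : Measure α} {g : α → ℝ≥0∞} (p : ℝ) : Measurable (reaG ν g p) := by
  unfold reaG
  refine Measurable.mul (by fun_prop) ?_
  exact rea_anti.measurable.comp (by fun_prop)

lemma lor_zero {α : Type*} [MeasurableSpace α] {ν : Measure α} {r : ℝ} (hr : 0 < r) {θ : ℝ≥0∞} (hθ : 1 ≤ θ) :
    lorentzNorm ν (ENNReal.ofReal r) θ (fun _ => 0) = 0 := by
  have h0 : ∀ x, reaG ν (fun _ => 0) r x = 0 := by
    intro x
    have : rea ν (fun _ => 0) (ENNReal.ofReal (Real.exp x)) = 0 := by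
      refine le_antisymm (rea_le ?_) bot_le
      simp
    rw [reaG, this, mul_zero]
  by_cases ht : θ = ∞
  · rw [ht, lor_top hr]; simp [h0]
  · have hq : 0 < θ.toReal := ENNReal.toReal_pos (by positivity) ht
    rw [lor_fin hr hθ ht]; simp [h0, hq]
end final

/-- **Lorentz-space dispersive estimate.**  Fix `d ≥ 1`, `2 < r < ∞` with conjugate exponent
`r'`, and `1 ≤ θ ≤ ∞`.  Then for every `t ≠ 0` and `u₀ ∈ L^{r',θ}(ℝ^d)`,
`‖e^{itΔ}u₀‖_{L^{r,θ}} ≤ C |t|^{-d(1/2-1/r)} ‖u₀‖_{L^{r',θ}}` with `C = C(d, r, θ)`. -/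
theorem lorentz_dispersive_estimate (d : ℕ) (hd : 1 ≤ d) (r r' : ℝ) (hr : 2 < r)
    (hr' : 1 / r + 1 / r' = 1) (θ : ℝ≥0∞) (hθ : 1 ≤ θ) :
    ∃ C : ℝ, 0 < C ∧
      ∀ (t : ℝ), t ≠ 0 →
        ∀ u₀ : EuclideanSpace ℝ (Fin d) → ℂ, Measurable u₀ →
          lorentzNormC volume (ENNReal.ofReal r') θ u₀ ≠ ∞ →
          lorentzNormC volume (ENNReal.ofReal r) θ (schrod d t u₀) ≤
            ENNReal.ofReal (C * |t| ^ (-((d : ℝ) * (1 / 2 - 1 / r)))) *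
              lorentzNormC volume (ENNReal.ofReal r') θ u₀ := by
  have hr0 : 0 < r := by linarith
  have h1r : 1 / r < 1 / 2 := one_div_lt_one_div_of_lt (by norm_num) hr
  have h1p : 1 / 2 < 1 / r' := by linarith
  have hp0 : 0 < r' := by
    by_contra! h
    have : 1 / r' ≤ 0 := one_div_nonpos.2 h
    linarith
  have hW := wt_sum hr0 h1p
  set W := ∑' i, wt r r' i with hWd
  have hWpos : 0 < W.toReal + 1 := by positivity
  set c0 : ℝ := (4 * π) ^ (-(d : ℝ) / 2 * (1 - 2 / r)) with hc0
  have hc0p : 0 < c0 := by positivity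
  refine ⟨c0 * (W.toReal + 1), by positivity, ?_⟩
  intro t ht f hf _
  by_cases hfi : Integrable f
  swap
  · have hz : schrod d t f = fun _ => 0 := by
      ext x
      simp only [schrod, if_neg ht]
      rw [integral_undef (by rwa [sch_integrable]), mul_zero]
    have : lorentzNormC (volume : Measure (EuclideanSpace ℝ (Fin d))) (ENNReal.ofReal r) θ (schrod d t f) = 0 := by
      rw [hz, lorentzNormC]
      simpa using lor_zero (ν := (volume : Measure (EuclideanSpace ℝ (Fin d)))) hr0 hθ
    rw [this]; exact bot_le
  have hK : ENNReal.ofReal (schA d t ^ (1 - 2 / r)) * W ≤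
      ENNReal.ofReal (c0 * (W.toReal + 1) * |t| ^ (-((d : ℝ) * (1 / 2 - 1 / r)))) := by
    have e : schA d t ^ (1 - 2 / r) = c0 * |t| ^ (-((d : ℝ) * (1 / 2 - 1 / r))) := by
      rw [schA, ← Real.rpow_mul (by positivity), Real.mul_rpow (by positivity) (by positivity), hc0]
      congr 2; ring
    have hW2 : W ≤ ENNReal.ofReal (W.toReal + 1) := by
      conv_lhs => rw [← ENNReal.ofReal_toReal hW]
      exact ENNReal.ofReal_le_ofReal (by linarith)
    refine (mul_le_mul_right hW2 _).trans ?_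
    rw [← ENNReal.ofReal_mul (Real.rpow_nonneg (schA_pos d ht).le _), e]
    exact le_of_eq (by congr 1; ring)
  have hG := schrod_G ht hf hfi hr'
  refine le_trans ?_ (mul_le_mul_left hK _)
  unfold lorentzNormC
  change lorentzNorm _ _ _ (fun x => ‖schrod d t f x‖ₑ) ≤ _ * lorentzNorm _ _ _ (fun x => ‖f x‖ₑ)
  by_cases hθt : θ = ∞
  · rw [hθt, lor_top hr0, lor_top hp0]
    exact conv_top _ _ _ _ hG
  · rw [lor_fin hr0 hθ hθt, lor_fin hp0 hθ hθt]
    have hq : 1 ≤ θ.toReal := by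
      have := ENNReal.toReal_mono hθt hθ
      simpa using this
    exact conv_fin (reaG_meas _) _ _ _ _ hG hq (by simp) hW
end
end

section
/- Inhomogeneous (retarded) Lorentz–Strichartz estimate: fix d ≥ 1 and let (p,q) be a Schrödinger-admissible pair with 2 < p < ∞, i.e. 2 ≤ q ≤ ∞, 2/p + d/q = d/2. Then for every spacetime function F with ‖F‖_{L^{p',2}_t L^{q'}_x(ℝ×ℝ^d)} < ∞ (p', q' conjugate exponents), one has ‖ ∫_0^t e^{i(t−s)Δ} F(s) ds ‖_{L^{p,2}_t L^q_x(ℝ×ℝ^d)} ≤ C ‖F‖_{L^{p',2}_t L^{q'}_x(ℝ×ℝ^d)}, with C depending only on d, p, q. -/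
open MeasureTheory Set
open scoped ENNReal Real

noncomputable section

section Planch
open FourierTransform SchwartzMap
open scoped ContDiff InnerProductSpace

lemma ls_fourier_continuous {E : Type*} [NormedAddCommGroup E] [InnerProductSpace ℝ E]
    [FiniteDimensional ℝ E] [MeasurableSpace E] [BorelSpace E]
    {f : E → ℂ} (hf : Integrable f) : Continuous (𝓕 f) :=
  VectorFourier.fourierIntegral_continuous Real.continuous_fourierChar
    (innerSL ℝ).continuous₂ hf

lemma ls_plancherel {E : Type*} [NormedAddCommGroup E] [InnerProductSpace ℝ E]
    [FiniteDimensional ℝ E] [MeasurableSpace E] [BorelSpace E]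
    {f : E → ℂ} (hf : Integrable f) (hf2 : MemLp f 2) :
    eLpNorm (𝓕 f) 2 volume = eLpNorm f 2 volume := by
  set g : Lp ℂ 2 (volume : Measure E) := hf2.toLp f with hg
  have key : ∀ᵐ x, 𝓕 f x = (𝓕 g : Lp ℂ 2 (volume : Measure E)) x := by
    apply ae_eq_of_integral_contDiff_smul_eq
    · exact (ls_fourier_continuous hf).locallyIntegrable
    · exact (Lp.memLp _).locallyIntegrable (by norm_num)
    · intro φ φ_smooth φ_cpt
      have hg₁ : HasCompactSupport (Complex.ofRealCLM ∘ φ) := φ_cpt.comp_left rfl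
      have hg₂ : ContDiff ℝ ∞ (Complex.ofRealCLM ∘ φ) := by fun_prop
      set ψ : 𝓢(E, ℂ) := hg₁.toSchwartzMap hg₂ with hψ
      have hψa : ∀ x, ψ x = (φ x : ℂ) := fun x => rfl
      have h1 : ∫ x, φ x • (𝓕 g : Lp ℂ 2 (volume : Measure E)) x
          = Lp.toTemperedDistribution (𝓕 g : Lp ℂ 2 (volume : Measure E)) ψ := by
        rw [Lp.toTemperedDistribution_apply]
        simp [hψa]
      rw [h1, ← Lp.fourier_toTemperedDistribution_eq, TemperedDistribution.fourier_apply,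
        Lp.toTemperedDistribution_apply]
      have h2 : ∫ x, (𝓕 ψ) x • g x = ∫ x, (𝓕 ψ) x • f x := by
        apply integral_congr_ae
        filter_upwards [hf2.coeFn_toLp] with x hx
        rw [hg, hx]
      rw [h2]
      have h3 := (VectorFourier.integral_fourierIntegral_smul_eq_flip (L := innerₗ E)
        Real.continuous_fourierChar continuous_inner (ψ.integrable (μ := volume)) hf)
      rw [flip_innerₗ] at h3
      refine Eq.trans ?_ h3.symm
      simp only [hψa]
      rfl
  rw [eLpNorm_congr_ae key]
  have := Lp.norm_fourier_eq g
  rw [Lp.norm_def, Lp.norm_def, ENNReal.toReal_eq_toReal_iff' (Lp.eLpNorm_ne_top _)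
    (Lp.eLpNorm_ne_top _)] at this
  rw [this]
  exact eLpNorm_congr_ae hf2.coeFn_toLp
end Planch
section SchrodBounds
open FourierTransform

/-- the dispersive constant -/
def lsK (d : ℕ) (t : ℝ) : ℝ := (4 * Real.pi * |t|) ^ (-(d : ℝ) / 2)

lemma lsK_pos (d : ℕ) {t : ℝ} (ht : t ≠ 0) : 0 < lsK d t := by
  unfold lsK
  have := abs_pos.mpr ht
  have := Real.pi_pos
  positivity

lemma ls_norm_const (d : ℕ) {t : ℝ} (ht : t ≠ 0) :
    ‖(4 * (Real.pi : ℂ) * Complex.I * (t : ℂ)) ^ (-(d : ℂ) / 2)‖ = lsK d t := by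
  have h0 : (4 * (Real.pi : ℂ) * Complex.I * (t : ℂ)) ≠ 0 := by
    have : (t : ℂ) ≠ 0 := by exact_mod_cast ht
    have : (Real.pi : ℂ) ≠ 0 := by exact_mod_cast Real.pi_ne_zero
    simp [*]
  have hw : (-(d : ℂ) / 2) = ((-(d : ℝ) / 2 : ℝ) : ℂ) := by push_cast; ring
  rw [hw, Complex.norm_cpow_of_ne_zero h0, Complex.ofReal_im, Complex.ofReal_re]
  simp [lsK, abs_of_pos Real.pi_pos]

lemma ls_norm_exp (a b : ℝ) :
    ‖Complex.exp (Complex.I * (a : ℂ) / (4 * (b : ℂ)))‖ = 1 := by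
  have : Complex.I * (a : ℂ) / (4 * (b : ℂ)) = ((a / (4 * b) : ℝ) : ℂ) * Complex.I := by
    push_cast; ring
  rw [this, Complex.norm_exp_ofReal_mul_I]

variable {d : ℕ}

lemma ls_exp_cont (t : ℝ) (x : EuclideanSpace ℝ (Fin d)) :
    Continuous fun y : EuclideanSpace ℝ (Fin d) =>
      Complex.exp (Complex.I * ((‖x - y‖ ^ 2 : ℝ) : ℂ) / (4 * (t : ℂ))) := by
  fun_prop

lemma ls_integrable_iff (t : ℝ) (x : EuclideanSpace ℝ (Fin d)) (f : EuclideanSpace ℝ (Fin d) → ℂ) :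
    Integrable (fun y => Complex.exp (Complex.I * ((‖x - y‖ ^ 2 : ℝ) : ℂ) / (4 * (t : ℂ))) * f y) ↔
      Integrable f := by
  constructor
  · intro h
    have h2 := h.bdd_mul (c := 1)
      (f := fun y => Complex.exp (Complex.I * ((‖x - y‖ ^ 2 : ℝ) : ℂ) / (4 * ((-t : ℝ) : ℂ))))
      (ls_exp_cont (-t) x).aestronglyMeasurable
      (Filter.Eventually.of_forall fun y => (ls_norm_exp _ _).le)
    refine h2.congr (Filter.Eventually.of_forall fun y => ?_)
    simp only
    rw [← mul_assoc, ← Complex.exp_add]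
    have : Complex.I * ((‖x - y‖ ^ 2 : ℝ) : ℂ) / (4 * ((-t : ℝ) : ℂ)) +
      Complex.I * ((‖x - y‖ ^ 2 : ℝ) : ℂ) / (4 * (t : ℂ)) = 0 := by
      push_cast
      rw [mul_neg, div_neg, neg_add_cancel]
    rw [this]; simp
  · intro h
    exact h.bdd_mul (c := 1) (ls_exp_cont t x).aestronglyMeasurable
      (Filter.Eventually.of_forall fun y => (ls_norm_exp _ _).le)

lemma ls_schrod_zero {t : ℝ} (ht : t ≠ 0) {f : EuclideanSpace ℝ (Fin d) → ℂ}
    (hf : ¬ Integrable f) : schrod d t f = 0 := by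
  funext x
  simp only [schrod, ht, if_false, Pi.zero_apply]
  rw [integral_undef (by rwa [ls_integrable_iff]), mul_zero]

lemma ls_schrod_add {t : ℝ} (ht : t ≠ 0) {f g : EuclideanSpace ℝ (Fin d) → ℂ}
    (hf : Integrable f) (hg : Integrable g) (x) :
    schrod d t (fun y => f y + g y) x = schrod d t f x + schrod d t g x := by
  simp only [schrod, ht, if_false]
  rw [← mul_add, ← integral_add ((ls_integrable_iff t x f).2 hf) ((ls_integrable_iff t x g).2 hg)]
  simp only [mul_add]

lemma ls_schrod_cont {t : ℝ} (ht : t ≠ 0) (f : EuclideanSpace ℝ (Fin d) → ℂ) :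
    Continuous (schrod d t f) := by
  by_cases hf : Integrable f
  · simp only [schrod, ht, if_false]
    refine continuous_const.mul ?_
    refine continuous_of_dominated (bound := fun y => ‖f y‖) ?_ ?_ hf.norm ?_
    · intro x; exact ((ls_integrable_iff t x f).2 hf).aestronglyMeasurable
    · intro x; filter_upwards with y
      rw [norm_mul, ls_norm_exp, one_mul]
    · filter_upwards with y
      fun_prop
  · rw [ls_schrod_zero ht hf]; exact continuous_const

lemma ls_schrod_sup {t : ℝ} (ht : t ≠ 0) (f : EuclideanSpace ℝ (Fin d) → ℂ) (x) :
    ‖schrod d t f x‖ₑ ≤ ENNReal.ofReal (lsK d t) * ∫⁻ y, ‖f y‖ₑ := by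
  simp only [schrod, ht, if_false]
  rw [enorm_mul]
  gcongr
  · rw [← ofReal_norm, ls_norm_const d ht]
  · refine (enorm_integral_le_lintegral_enorm _).trans (lintegral_mono fun y => ?_)
    rw [enorm_mul, ← ofReal_norm, ls_norm_exp]; simp

lemma ls_schrod_norm_eq {t : ℝ} (ht : t ≠ 0) (f : EuclideanSpace ℝ (Fin d) → ℂ) (x) :
    ‖schrod d t f x‖ = lsK d t * ‖𝓕 (fun y : EuclideanSpace ℝ (Fin d) =>
      Complex.exp (Complex.I * ((‖0 - y‖ ^ 2 : ℝ) : ℂ) / (4 * (t : ℂ))) * f y)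
        ((4 * Real.pi * t)⁻¹ • x)‖ := by
  simp only [schrod, ht, if_false]
  rw [norm_mul, ls_norm_const d ht, Real.fourier_eq']
  congr 1
  have : ∀ y, Complex.exp (Complex.I * ((‖x - y‖ ^ 2 : ℝ) : ℂ) / (4 * (t : ℂ))) * f y =
    Complex.exp (Complex.I * ((‖x‖ ^ 2 : ℝ) : ℂ) / (4 * (t : ℂ))) *
    (Complex.exp (((-2 * Real.pi * inner ℝ y ((4 * Real.pi * t)⁻¹ • x) : ℝ) : ℂ) * Complex.I) •
     (Complex.exp (Complex.I * ((‖0 - y‖ ^ 2 : ℝ) : ℂ) / (4 * (t : ℂ))) * f y)) := by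
    intro y
    rw [smul_eq_mul, ← mul_assoc, ← mul_assoc, ← Complex.exp_add, ← Complex.exp_add]
    congr 2
    rw [norm_sub_sq_real, zero_sub, norm_neg, inner_smul_right, real_inner_comm x y]
    have h1 : (t : ℂ) ≠ 0 := by exact_mod_cast ht
    have h2 : (Real.pi : ℂ) ≠ 0 := by exact_mod_cast Real.pi_ne_zero
    push_cast
    field_simp
    ring
  simp_rw [this]
  rw [integral_const_mul, norm_mul, ls_norm_exp, one_mul]

lemma ls_schrod_L2 {t : ℝ} (ht : t ≠ 0) {f : EuclideanSpace ℝ (Fin d) → ℂ}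
    (hf : Integrable f) (hf2 : MemLp f 2) :
    ∫⁻ x, ‖schrod d t f x‖ₑ ^ (2 : ℝ) ≤ ∫⁻ x, ‖f x‖ₑ ^ (2 : ℝ) := by
  set h : EuclideanSpace ℝ (Fin d) → ℂ := fun y =>
      Complex.exp (Complex.I * ((‖0 - y‖ ^ 2 : ℝ) : ℂ) / (4 * (t : ℂ))) * f y with hh
  have hn : ∀ y, ‖h y‖ₑ = ‖f y‖ₑ := by
    intro y; rw [hh, enorm_mul, ← ofReal_norm, ls_norm_exp]; simp
  have hint : Integrable h := (ls_integrable_iff t 0 f).2 hf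
  have h2 : MemLp h 2 := by
    refine ⟨hint.aestronglyMeasurable, ?_⟩
    rw [eLpNorm_congr_enorm_ae (g := f) (Filter.Eventually.of_forall hn)]
    exact hf2.2
  have P := ls_plancherel hint h2
  rw [eLpNorm_congr_enorm_ae (f := h) (g := f) (Filter.Eventually.of_forall hn)] at P
  rw [eLpNorm_eq_lintegral_rpow_enorm_toReal (by norm_num) (by norm_num),
    eLpNorm_eq_lintegral_rpow_enorm_toReal (by norm_num) (by norm_num)] at P
  replace P : ∫⁻ x, ‖𝓕 h x‖ₑ ^ (2 : ℝ) = ∫⁻ x, ‖f x‖ₑ ^ (2 : ℝ) := by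
    have := congrArg (fun z : ℝ≥0∞ => z ^ (2 : ℝ)) P
    simp only [← ENNReal.rpow_mul] at this
    norm_num at this
    simpa using this
  rw [← P]
  have e : ∀ x, ‖schrod d t f x‖ₑ ^ (2 : ℝ) = ENNReal.ofReal (lsK d t) ^ (2 : ℝ) *
      ‖𝓕 h ((4 * Real.pi * t)⁻¹ • x)‖ₑ ^ (2 : ℝ) := by
    intro x
    rw [← ofReal_norm, ls_schrod_norm_eq ht, ENNReal.ofReal_mul (lsK_pos d ht).le,
      ENNReal.mul_rpow_of_nonneg _ _ (by norm_num), ofReal_norm]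
  simp_rw [e]
  have ha : (4 * Real.pi * t)⁻¹ ≠ 0 := by
    have := Real.pi_ne_zero
    positivity
  have hc := ls_fourier_continuous hint
  rw [lintegral_const_mul' _ _ (by simp)]
  have hm := lintegral_map (μ := (volume : Measure (EuclideanSpace ℝ (Fin d))))
    (f := fun x => ‖𝓕 h x‖ₑ ^ (2 : ℝ)) (g := fun x => (4 * Real.pi * t)⁻¹ • x)
    (by fun_prop) (by fun_prop)
  rw [← hm, Measure.map_addHaar_smul _ ha, lintegral_smul_measure, smul_eq_mul, ← mul_assoc]
  refine (mul_le_of_le_one_left zero_le (le_of_eq ?_))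
  have hp : 0 < 4 * Real.pi * |t| := by
    have := abs_pos.mpr ht
    have := Real.pi_pos
    positivity
  rw [ENNReal.ofReal_rpow_of_pos (lsK_pos d ht), ← ENNReal.ofReal_mul (Real.rpow_nonneg (lsK_pos d ht).le _)]
  rw [finrank_euclideanSpace_fin, inv_pow, inv_inv, abs_pow, abs_mul, abs_of_pos (by positivity :
    0 < 4 * Real.pi), lsK, ← Real.rpow_mul hp.le, ← Real.rpow_natCast, ← Real.rpow_add hp]
  have : -(d : ℝ) / 2 * 2 + d = 0 := by ring
  rw [this]; simp

end SchrodBounds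
section Interp

lemma ls_lint_rpow {a L : ℝ} (ha : -1 < a) (hL : 0 ≤ L) :
    ∫⁻ x in Ioc 0 L, ENNReal.ofReal (x ^ a) = ENNReal.ofReal (L ^ (a + 1) / (a + 1)) := by
  have h := intervalIntegral.intervalIntegrable_rpow' (a := 0) (b := L) ha
  rw [intervalIntegrable_iff_integrableOn_Ioc_of_le hL] at h
  rw [← ofReal_integral_eq_lintegral_ofReal h, ← intervalIntegral.integral_of_le hL,
    integral_rpow (Or.inl ha), Real.zero_rpow (by linarith), sub_zero]
  filter_upwards [ae_restrict_mem measurableSet_Ioc] with x hx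
  exact Real.rpow_nonneg hx.1.le _

lemma ls_lint_rpow_Ioi {a L : ℝ} (ha : a < -1) (hL : 0 < L) :
    ∫⁻ x in Ioi L, ENNReal.ofReal (x ^ a) = ENNReal.ofReal (L ^ (a + 1) / (-(a + 1))) := by
  have h := integrableOn_Ioi_rpow_of_lt ha hL
  rw [← ofReal_integral_eq_lintegral_ofReal h, integral_Ioi_rpow_of_lt ha hL, div_neg, neg_div]
  filter_upwards [ae_restrict_mem measurableSet_Ioi] with x hx
  exact Real.rpow_nonneg (hL.trans hx).le _

variable {d : ℕ}

lemma ls_cheb {t : ℝ} (ht : t ≠ 0) {q r : ℝ} (hq : 2 < q) (hr : 1 < r)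
    {f : EuclideanSpace ℝ (Fin d) → ℂ} (hfm : StronglyMeasurable f)
    (hf : Integrable f) {M : ℝ} (hM : 0 < M) (hfM : ∫⁻ y, ‖f y‖ₑ ^ r ≤ ENNReal.ofReal M)
    {l : ℝ} (hl : 0 < l) :
    volume {x | l < ‖schrod d t f x‖ / 2} * ENNReal.ofReal (l ^ (q - 1)) ≤
      ∫⁻ y, {z : ℝ × EuclideanSpace ℝ (Fin d) | z.1 * ‖f z.2‖ ^ (r - 1) ≤ lsK d t * M}.indicator
        (fun z => ENNReal.ofReal (z.1 ^ (q - 3)) * ‖f z.2‖ₑ ^ (2 : ℝ)) (l, y) := by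
  have hK := lsK_pos d ht
  set S : Set (EuclideanSpace ℝ (Fin d)) := {y | l * ‖f y‖ ^ (r - 1) ≤ lsK d t * M} with hS
  have hfn : Measurable fun y => ‖f y‖ := hfm.norm.measurable
  have hSm : MeasurableSet S := by
    apply measurableSet_le _ measurable_const
    exact (hfn.pow_const _).const_mul _
  set f1 := Sᶜ.indicator f with hf1
  set f2 := S.indicator f with hf2
  have i1 : Integrable f1 := hf.indicator hSm.compl
  have i2 : Integrable f2 := hf.indicator hSm
  have hsum : f = fun y => f2 y + f1 y := by
    funext y; exact (congrFun (Set.indicator_self_add_compl S f) y).symm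
  -- f1 bound
  have b1 : ENNReal.ofReal (lsK d t) * ∫⁻ y, ‖f1 y‖ₑ ≤ ENNReal.ofReal l := by
    have h1 : ∀ y, ENNReal.ofReal (lsK d t * M) * ‖f1 y‖ₑ ≤ ENNReal.ofReal l * ‖f y‖ₑ ^ r := by
      intro y
      by_cases hy : y ∈ S
      · simp [hf1, hy]
      · have h2 : lsK d t * M < l * ‖f y‖ ^ (r - 1) := by simpa [hS] using hy
        have h3 : f1 y = f y := by simp [hf1, hy]
        have h4 : 0 < ‖f y‖ := by
          rcases (norm_nonneg (f y)).eq_or_lt with h | h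
          · rw [← h, Real.zero_rpow (by linarith), mul_zero] at h2
            have := mul_pos hK hM; linarith
          · exact h
        rw [h3, ← ofReal_norm, ENNReal.ofReal_rpow_of_pos h4, ← ENNReal.ofReal_mul (by positivity),
          ← ENNReal.ofReal_mul hl.le]
        apply ENNReal.ofReal_le_ofReal
        have h5 : ‖f y‖ ^ r = ‖f y‖ ^ (r - 1) * ‖f y‖ := by
          rw [← Real.rpow_add_one h4.ne']; congr 1; ring
        rw [h5, ← mul_assoc]
        gcongr
    have h2 := lintegral_mono (μ := volume) h1
    rw [lintegral_const_mul' _ _ (by simp), lintegral_const_mul' _ _ (by simp)] at h2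
    have h3 := h2.trans (mul_le_mul_right hfM _)
    rw [ENNReal.ofReal_mul hK.le, mul_assoc, mul_comm (ENNReal.ofReal M), ← mul_assoc] at h3
    exact (ENNReal.mul_le_mul_iff_left (by simpa using hM) (by simp)).1 h3
  -- f2 in L2
  have m2 : MemLp f2 2 := by
    have hbd : ∀ y, ‖f2 y‖ ≤ (lsK d t * M / l) ^ (1 / (r - 1)) := by
      intro y
      have hpos : 0 < lsK d t * M / l := by positivity
      by_cases hy : y ∈ S
      · have h3 : f2 y = f y := by simp [hf2, hy]
        rw [h3]
        have h4 : ‖f y‖ ^ (r - 1) ≤ lsK d t * M / l := by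
          rw [le_div_iff₀ hl]; rw [mul_comm]; exact hy
        calc ‖f y‖ = (‖f y‖ ^ (r - 1)) ^ (1 / (r - 1)) := by
              rw [← Real.rpow_mul (norm_nonneg _), mul_one_div_cancel (by linarith), Real.rpow_one]
          _ ≤ _ := by
              apply Real.rpow_le_rpow (by positivity) h4
              apply one_div_nonneg.2; linarith
      · simp only [hf2, hy, not_false_eq_true, indicator_of_notMem, norm_zero]; positivity
    rw [memLp_two_iff_integrable_sq_norm i2.aestronglyMeasurable]
    have := i2.norm.bdd_mul i2.norm.aestronglyMeasurable
      (Filter.Eventually.of_forall fun y => by rw [norm_norm]; exact hbd y)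
    refine this.congr (Filter.Eventually.of_forall fun y => ?_)
    simp [sq]
  have L2 := ls_schrod_L2 ht i2 m2
  have sub : {x | l < ‖schrod d t f x‖ / 2} ⊆
      {x | ENNReal.ofReal (l ^ (2 : ℝ)) ≤ ‖schrod d t f2 x‖ₑ ^ (2 : ℝ)} := by
    intro x hx
    have hx' : 2 * l < ‖schrod d t f x‖ := by
      have : l < ‖schrod d t f x‖ / 2 := hx
      linarith
    have e1 : schrod d t f x = schrod d t f2 x + schrod d t f1 x := by
      conv_lhs => rw [hsum]
      exact ls_schrod_add ht i2 i1 x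
    have e2 : ‖schrod d t f1 x‖ ≤ l := by
      have := (ls_schrod_sup ht f1 x).trans b1
      rw [← ofReal_norm] at this
      exact (ENNReal.ofReal_le_ofReal_iff hl.le).1 this
    have e3 : l ≤ ‖schrod d t f2 x‖ := by
      have := norm_add_le (schrod d t f2 x) (schrod d t f1 x)
      rw [← e1] at this
      linarith
    simp only [mem_ofPred_eq]
    rw [← ofReal_norm, ENNReal.ofReal_rpow_of_nonneg (norm_nonneg _) (by norm_num)]
    apply ENNReal.ofReal_le_ofReal
    gcongr
  have ch := mul_meas_ge_le_lintegral (μ := volume) (f := fun x => ‖schrod d t f2 x‖ₑ ^ (2 : ℝ))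
    (((ls_schrod_cont ht f2).measurable.enorm).pow_const _) (ENNReal.ofReal (l ^ (2 : ℝ)))
  have hl3 : l ^ (q - 1) = l ^ (q - 3) * l ^ (2 : ℝ) := by
    rw [← Real.rpow_add hl]; congr 1; ring
  calc volume {x | l < ‖schrod d t f x‖ / 2} * ENNReal.ofReal (l ^ (q - 1))
      ≤ volume {x | ENNReal.ofReal (l ^ (2 : ℝ)) ≤ ‖schrod d t f2 x‖ₑ ^ (2 : ℝ)} *
        ENNReal.ofReal (l ^ (q - 1)) := by gcongr
    _ = ENNReal.ofReal (l ^ (q - 3)) * (ENNReal.ofReal (l ^ (2 : ℝ)) *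
        volume {x | ENNReal.ofReal (l ^ (2 : ℝ)) ≤ ‖schrod d t f2 x‖ₑ ^ (2 : ℝ)}) := by
        rw [hl3, ENNReal.ofReal_mul (by positivity)]; ring
    _ ≤ ENNReal.ofReal (l ^ (q - 3)) * ∫⁻ x, ‖f2 x‖ₑ ^ (2 : ℝ) := by
        gcongr; exact ch.trans L2
    _ = _ := by
        rw [← lintegral_const_mul' _ _ (by simp)]
        refine lintegral_congr fun y => ?_
        by_cases hy : y ∈ S
        · rw [indicator_of_mem (by exact hy)]; simp [hf2, hy]
        · rw [indicator_of_notMem (by exact hy)]; simp [hf2, hy]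

lemma ls_disp_meas {t : ℝ} (ht : t ≠ 0) {q r : ℝ} (hq : 2 < q) (hr : 1 < r)
    (hqr : 1 / q + 1 / r = 1)
    {f : EuclideanSpace ℝ (Fin d) → ℂ} (hfm : StronglyMeasurable f)
    (hf : Integrable f) {M : ℝ} (hM : 0 < M) (hfM : ∫⁻ y, ‖f y‖ₑ ^ r = ENNReal.ofReal M) :
    ∫⁻ x, ‖schrod d t f x‖ₑ ^ q ≤
      ENNReal.ofReal (2 ^ q * q / (q - 2) * (lsK d t) ^ (q - 2) * M ^ (q - 1)) := by
  have hK := lsK_pos d ht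
  have hfn : Measurable fun y => ‖f y‖ := hfm.norm.measurable
  have lc := lintegral_rpow_eq_lintegral_meas_lt_mul (volume : Measure (EuclideanSpace ℝ (Fin d)))
    (f := fun x => ‖schrod d t f x‖ / 2) (Filter.Eventually.of_forall fun x => by positivity)
    ((ls_schrod_cont ht f).norm.div_const 2).aemeasurable (p := q) (by linarith)
  have e1 : ∫⁻ x, ‖schrod d t f x‖ₑ ^ q = ENNReal.ofReal (2 ^ q) *
      ∫⁻ x, ENNReal.ofReal ((‖schrod d t f x‖ / 2) ^ q) := by
    rw [← lintegral_const_mul' _ _ (by simp)]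
    refine lintegral_congr fun x => ?_
    rw [← ENNReal.ofReal_mul (by positivity), ← Real.mul_rpow (by positivity) (by positivity),
      ← ofReal_norm, ENNReal.ofReal_rpow_of_nonneg (norm_nonneg _) (by linarith)]
    congr 2; ring
  rw [e1, lc]
  set A := {z : ℝ × EuclideanSpace ℝ (Fin d) | z.1 * ‖f z.2‖ ^ (r - 1) ≤ lsK d t * M} with hA
  have hAm : MeasurableSet A := by
    apply measurableSet_le _ measurable_const
    exact measurable_fst.mul ((hfn.comp measurable_snd).pow_const _)
  have step : ∫⁻ l in Ioi (0 : ℝ), volume {x | l < ‖schrod d t f x‖ / 2} *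
      ENNReal.ofReal (l ^ (q - 1)) ≤ ENNReal.ofReal ((lsK d t * M) ^ (q - 2) / (q - 2) * M) := by
    calc _ ≤ ∫⁻ l in Ioi (0 : ℝ), ∫⁻ y, A.indicator
            (fun z => ENNReal.ofReal (z.1 ^ (q - 3)) * ‖f z.2‖ₑ ^ (2 : ℝ)) (l, y) :=
          setLIntegral_mono' measurableSet_Ioi fun l hl => ls_cheb ht hq hr hfm hf hM hfM.le hl
      _ = ∫⁻ y, ∫⁻ l in Ioi (0 : ℝ), A.indicator
            (fun z => ENNReal.ofReal (z.1 ^ (q - 3)) * ‖f z.2‖ₑ ^ (2 : ℝ)) (l, y) := by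
          rw [lintegral_lintegral_swap]
          apply Measurable.aemeasurable
          have : Measurable fun z : ℝ × EuclideanSpace ℝ (Fin d) =>
            ENNReal.ofReal (z.1 ^ (q - 3)) * ‖f z.2‖ₑ ^ (2 : ℝ) :=
            ((measurable_fst.pow_const _).ennreal_ofReal).mul
              ((hfm.measurable.comp measurable_snd).enorm.pow_const _)
          exact this.indicator hAm
      _ ≤ ∫⁻ y, ENNReal.ofReal ((lsK d t * M) ^ (q - 2) / (q - 2)) * ‖f y‖ₑ ^ r := by
          refine lintegral_mono fun y => ?_
          rcases (norm_nonneg (f y)).eq_or_lt with h | h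
          · have : ‖f y‖ₑ = 0 := by rw [← ofReal_norm, ← h]; simp
            refine le_trans (le_of_eq ?_) zero_le
            rw [lintegral_eq_zero_of_ae_eq_zero]
            filter_upwards with l
            simp [indicator, this]
          · set L := lsK d t * M * ‖f y‖ ^ (-(r - 1)) with hL
            have hL0 : 0 < L := by positivity
            have hb : ∀ l ∈ Ioi (0 : ℝ), A.indicator
              (fun z => ENNReal.ofReal (z.1 ^ (q - 3)) * ‖f z.2‖ₑ ^ (2 : ℝ)) (l, y) =
              (Ioc 0 L).indicator (fun l => ENNReal.ofReal (l ^ (q - 3)) * ‖f y‖ₑ ^ (2 : ℝ)) l := by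
              intro l hl
              have hiff : (l, y) ∈ A ↔ l ∈ Ioc 0 L := by
                simp only [hA, mem_ofPred_eq, mem_Ioc, hL, Real.rpow_neg h.le,
                  ← div_eq_mul_inv]
                rw [le_div_iff₀ (by positivity)]
                exact ⟨fun h => ⟨hl, h⟩, fun h => h.2⟩
              by_cases hm : (l, y) ∈ A
              · rw [indicator_of_mem hm, indicator_of_mem (hiff.1 hm)]
              · rw [indicator_of_notMem hm, indicator_of_notMem (fun hh => hm (hiff.2 hh))]
            rw [setLIntegral_congr_fun measurableSet_Ioi hb, lintegral_indicator measurableSet_Ioc,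
              Measure.restrict_restrict measurableSet_Ioc,
              inter_eq_left.2 (fun x hx => hx.1), lintegral_mul_const' _ _ (by simp),
              ls_lint_rpow (by linarith) hL0.le, ← ofReal_norm, ENNReal.ofReal_rpow_of_pos h,
              ENNReal.ofReal_rpow_of_pos h, ← ENNReal.ofReal_mul (by
                apply div_nonneg (by positivity) (by linarith)), ← ENNReal.ofReal_mul (by
                apply div_nonneg (by positivity) (by linarith))]
            apply ENNReal.ofReal_le_ofReal
            apply le_of_eq
            have : q - 3 + 1 = q - 2 := by ring
            rw [this, hL, Real.mul_rpow (by positivity) (by positivity), ← Real.rpow_mul h.le,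
              mul_div_right_comm, mul_assoc, ← Real.rpow_add h]
            congr 2
            field_simp at hqr
            nlinarith
      _ = _ := by
          rw [lintegral_const_mul' _ _ (by simp), hfM, ← ENNReal.ofReal_mul]
          apply div_nonneg (by positivity) (by linarith)
  calc _ ≤ ENNReal.ofReal (2 ^ q) * (ENNReal.ofReal q *
        ENNReal.ofReal ((lsK d t * M) ^ (q - 2) / (q - 2) * M)) := by gcongr
    _ = _ := by
      rw [← ENNReal.ofReal_mul (by linarith), ← ENNReal.ofReal_mul (by positivity)]
      congr 1
      rw [Real.mul_rpow hK.le hM.le]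
      have : M ^ (q - 1) = M ^ (q - 2) * M := by
        rw [← Real.rpow_add_one hM.ne']; congr 1; ring
      rw [this]; ring

lemma ls_disp {t : ℝ} (ht : t ≠ 0) {q r : ℝ} (hq : 2 < q) (hr : 1 < r)
    (hqr : 1 / q + 1 / r = 1) (f : EuclideanSpace ℝ (Fin d) → ℂ) :
    (∫⁻ x, ‖schrod d t f x‖ₑ ^ q) ^ (1 / q) ≤
      ENNReal.ofReal ((2 ^ q * q / (q - 2)) ^ (1 / q) * (lsK d t) ^ (1 - 2 / q)) *
        (∫⁻ x, ‖f x‖ₑ ^ r) ^ (1 / r) := by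
  have hK := lsK_pos d ht
  have hq0 : 0 < q := by linarith
  have hq2 : 0 < q - 2 := by linarith
  have hr0 : 0 < r := by linarith
  by_cases hf : Integrable f
  swap
  · rw [ls_schrod_zero ht hf]; simp [hq0]
  wlog hfm : StronglyMeasurable f generalizing f
  · have hae := hf.1.ae_eq_mk
    have e1 : schrod d t f = schrod d t (hf.1.mk f) := by
      funext x
      simp only [schrod, ht, if_false]
      congr 1
      apply integral_congr_ae
      filter_upwards [hae] with y hy
      rw [hy]
    have e2 : ∫⁻ x, ‖f x‖ₑ ^ r = ∫⁻ x, ‖hf.1.mk f x‖ₑ ^ r := by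
      apply lintegral_congr_ae
      filter_upwards [hae] with y hy
      rw [hy]
    rw [e1, e2]
    exact this _ (hf.congr hae) hf.1.stronglyMeasurable_mk
  by_cases h0 : ∫⁻ y, ‖f y‖ₑ ^ r = 0
  · rw [lintegral_eq_zero_iff (hfm.measurable.enorm.pow_const _)] at h0
    have h1 : ∫⁻ y, ‖f y‖ₑ = 0 := by
      rw [lintegral_eq_zero_iff hfm.measurable.enorm]
      filter_upwards [h0] with y hy
      simpa [hr0, hr0.not_gt] using hy
    have h2 : ∀ x, ‖schrod d t f x‖ₑ = 0 := by
      intro x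
      have := ls_schrod_sup ht f x
      rw [h1, mul_zero] at this
      exact le_antisymm this zero_le
    simp [h2, hq0]
  by_cases h1 : ∫⁻ y, ‖f y‖ₑ ^ r = ∞
  · rw [h1, ENNReal.top_rpow_of_pos (by positivity), ENNReal.mul_top]
    · exact le_top
    · simp only [ne_eq, ENNReal.ofReal_eq_zero, not_le]
      positivity
  have hM : 0 < (∫⁻ y, ‖f y‖ₑ ^ r).toReal := ENNReal.toReal_pos h0 h1
  have h2 := ls_disp_meas ht hq hr hqr hfm hf hM (ENNReal.ofReal_toReal h1).symm
  set M := (∫⁻ y, ‖f y‖ₑ ^ r).toReal with hMd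
  rw [← ENNReal.ofReal_toReal h1, ← hMd, ENNReal.ofReal_rpow_of_pos hM,
    ← ENNReal.ofReal_mul (by positivity)]
  refine (ENNReal.rpow_le_rpow h2 (by positivity)).trans (le_of_eq ?_)
  rw [ENNReal.ofReal_rpow_of_pos (by positivity)]
  congr 1
  rw [Real.mul_rpow (by positivity) (by positivity), Real.mul_rpow (by positivity) (by positivity),
    ← Real.rpow_mul hK.le, ← Real.rpow_mul hM.le]
  congr 2
  · congr 1; field_simp
  · field_simp at hqr ⊢
    linarith

end Interp
section Mink
open Filter Topology

lemma ls_minkowski {α β : Type*} [MeasurableSpace α] [MeasurableSpace β] (μ : Measure α)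
    [SFinite μ] (ν : Measure β) [SigmaFinite ν] {q : ℝ} (hq : 1 < q) (h : β → α → ℝ≥0∞)
    (hm : Measurable (Function.uncurry h)) :
    (∫⁻ x, (∫⁻ s, h x s ∂μ) ^ q ∂ν) ^ (1 / q) ≤ ∫⁻ s, (∫⁻ x, h x s ^ q ∂ν) ^ (1 / q) ∂μ := by
  have hq0 : 0 < q := by linarith
  set R := ∫⁻ s, (∫⁻ x, h x s ^ q ∂ν) ^ (1 / q) ∂μ with hR
  set W : β → ℝ≥0∞ := fun x => ∫⁻ s, h x s ∂μ with hW
  have hWm : Measurable W := hm.lintegral_prod_right'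
  have hconj : q.HolderConjugate (q / (q - 1)) := Real.HolderConjugate.conjExponent hq
  have key : ∀ V : β → ℝ≥0∞, Measurable V → (∀ x, V x ≤ W x) → ∫⁻ x, V x ^ q ∂ν ≠ ∞ →
      ∫⁻ x, V x ^ q ∂ν ≤ R ^ q := by
    intro V hVm hVW hI
    set I := ∫⁻ x, V x ^ q ∂ν with hId
    have hVq : Measurable fun x => V x ^ (q - 1) := hVm.pow_const _
    have h1 : I ≤ R * I ^ (1 / (q / (q - 1))) := by
      calc I ≤ ∫⁻ x, W x * V x ^ (q - 1) ∂ν := by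
            refine lintegral_mono fun x => ?_
            have : V x ^ q = V x * V x ^ (q - 1) := by
              conv_rhs => rw [← ENNReal.rpow_one (V x), ← ENNReal.rpow_mul, one_mul]
              rw [← ENNReal.rpow_add_of_nonneg _ _ (by norm_num) (by linarith)]
              congr 1; ring
            simp only [this]
            gcongr
            exact hVW x
        _ = ∫⁻ x, ∫⁻ s, h x s * V x ^ (q - 1) ∂μ ∂ν := by
            refine lintegral_congr fun x => ?_
            rw [lintegral_mul_const]
            exact hm.comp (measurable_const.prodMk measurable_id)
        _ = ∫⁻ s, ∫⁻ x, h x s * V x ^ (q - 1) ∂ν ∂μ := by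
            rw [lintegral_lintegral_swap]
            exact (hm.mul (hVq.comp measurable_fst)).aemeasurable
        _ ≤ ∫⁻ s, (∫⁻ x, h x s ^ q ∂ν) ^ (1 / q) * I ^ (1 / (q / (q - 1))) ∂μ := by
            refine lintegral_mono fun s => ?_
            have := ENNReal.lintegral_mul_le_Lp_mul_Lq ν hconj (f := fun x => h x s)
              (g := fun x => V x ^ (q - 1))
              (hm.comp (measurable_id.prodMk measurable_const)).aemeasurable hVq.aemeasurable
            refine this.trans (le_of_eq ?_)
            congr 3
            funext x
            rw [← ENNReal.rpow_mul, mul_div_cancel₀ _ (by linarith)]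
        _ = R * I ^ (1 / (q / (q - 1))) := by
            rw [lintegral_mul_const' _ _ (ENNReal.rpow_ne_top_of_nonneg (by
              apply one_div_nonneg.2; apply div_nonneg <;> linarith) hI)]
    rcases eq_or_ne I 0 with h0 | h0
    · rw [h0]; exact zero_le
    have h2 : I = I ^ (1 / q) * I ^ (1 / (q / (q - 1))) := by
      rw [← ENNReal.rpow_add _ _ h0 hI]
      have : 1 / q + 1 / (q / (q - 1)) = 1 := by field_simp; ring
      rw [this, ENNReal.rpow_one]
    have h3 : I ^ (1 / q) ≤ R := by
      have h1' : I ^ (1 / q) * I ^ (1 / (q / (q - 1))) ≤ R * I ^ (1 / (q / (q - 1))) := by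
        rw [← h2]; exact h1
      have := (ENNReal.mul_le_mul_iff_left ?_ ?_).1 h1'
      · exact this
      · exact (ENNReal.rpow_pos (pos_iff_ne_zero.2 h0) hI).ne'
      · exact ENNReal.rpow_ne_top_of_nonneg (by
              apply one_div_nonneg.2; apply div_nonneg <;> linarith) hI
    have := ENNReal.rpow_le_rpow h3 hq0.le
    rwa [← ENNReal.rpow_mul, one_div_mul_cancel hq0.ne', ENNReal.rpow_one] at this
  rw [one_div, ENNReal.rpow_inv_le_iff hq0]
  set V : ℕ → β → ℝ≥0∞ := fun n => (spanningSets ν n).indicator (fun x => min (W x) n) with hV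
  have hVm : ∀ n, Measurable (V n) := fun n =>
    (hWm.min measurable_const).indicator (measurableSet_spanningSets ν n)
  have hVb : ∀ n, ∫⁻ x, V n x ^ q ∂ν ≤ R ^ q := by
    intro n
    apply key _ (hVm n)
    · intro x
      refine (indicator_le_self' (fun _ _ => zero_le) x).trans (min_le_left _ _)
    · have : ∫⁻ x, V n x ^ q ∂ν ≤ ∫⁻ x, (spanningSets ν n).indicator (fun _ => (n : ℝ≥0∞) ^ q) x ∂ν := by
        refine lintegral_mono fun x => ?_
        by_cases hx : x ∈ spanningSets ν n
        · simp only [hV, indicator_of_mem hx]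
          gcongr
          exact min_le_right _ _
        · simp [hV, indicator_of_notMem hx, hq0]
      refine ne_top_of_le_ne_top ?_ this
      rw [lintegral_indicator_const (measurableSet_spanningSets ν n)]
      exact ENNReal.mul_ne_top (ENNReal.rpow_ne_top_of_nonneg hq0.le (by simp))
        (measure_spanningSets_lt_top ν n).ne
  have hlim : ∀ x, Tendsto (fun n => V n x ^ q) atTop (𝓝 (W x ^ q)) := by
    intro x
    refine (ENNReal.continuous_rpow_const.tendsto _).comp ?_
    have h1 : Tendsto (fun n : ℕ => min (W x) (n : ℝ≥0∞)) atTop (𝓝 (min (W x) ⊤)) :=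
      tendsto_const_nhds.min ENNReal.tendsto_nat_nhds_top
    rw [min_eq_left le_top] at h1
    refine h1.congr' ?_
    filter_upwards [eventually_ge_atTop (spanningSetsIndex ν x)] with n hn
    simp only [hV]
    rw [indicator_of_mem]
    exact monotone_spanningSets ν hn (mem_spanningSetsIndex ν x)
  calc ∫⁻ x, W x ^ q ∂ν = ∫⁻ x, liminf (fun n => V n x ^ q) atTop ∂ν :=
        lintegral_congr fun x => (hlim x).liminf_eq.symm
    _ ≤ liminf (fun n => ∫⁻ x, V n x ^ q ∂ν) atTop :=
        lintegral_liminf_le fun n => (hVm n).pow_const _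
    _ ≤ R ^ q := by
        refine (liminf_le_liminf (Eventually.of_forall hVb)).trans ?_
        simp

lemma ls_mink_int {E : Type*} [TopologicalSpace E] [PolishSpace E]
    [MeasurableSpace E] [BorelSpace E] (ν : Measure E) [SigmaFinite ν]
    {q : ℝ} (hq : 1 < q) (t : ℝ) (u : ℝ → E → ℂ) (hu : ∀ s, s ≠ t → Continuous (u s))
    (H : ℝ → ℝ≥0∞) (hH : ∀ s, s ≠ t → (∫⁻ x, ‖u s x‖ₑ ^ q ∂ν) ^ (1 / q) ≤ H s) :
    (∫⁻ x, ‖∫ s in (0 : ℝ)..t, u s x‖ₑ ^ q ∂ν) ^ (1 / q) ≤ ∫⁻ s, H s := by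
  have hq0 : 0 < q := by linarith
  set μ : Measure ℝ := volume.restrict (uIoc 0 t) with hμ
  have hμt : ∀ᵐ s ∂μ, s ≠ t := ae_restrict_of_ae (by simp [ae_iff])
  set X : Set E := {x | AEStronglyMeasurable (fun s => u s x) μ} with hX
  have hXc : IsClosed X := by
    letI := TopologicalSpace.upgradeIsCompletelyMetrizable E
    apply IsSeqClosed.isClosed
    intro xs x hxs hx
    refine aestronglyMeasurable_of_tendsto_ae atTop (f := fun n s => u s (xs n)) hxs ?_
    filter_upwards [hμt] with s hs
    exact ((hu s hs).tendsto x).comp hx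
  have hXm : MeasurableSet X := hXc.measurableSet
  obtain ⟨D, hDc, hDd⟩ := TopologicalSpace.exists_countable_dense X
  have hmk : ∀ i : X, AEStronglyMeasurable (fun s => u s i) μ := fun i => i.2
  set N : Set ℝ := {s | ¬ (s ≠ t ∧ ∀ i ∈ D, u s i = (hmk i).mk _ s)} with hN
  have hN0 : μ N = 0 := by
    rw [← ae_iff]
    have h1 : ∀ᵐ s ∂μ, ∀ i ∈ D, u s i = (hmk i).mk _ s :=
      (ae_ball_iff hDc).2 fun i _ => (hmk i).ae_eq_mk
    exact hμt.and h1
  set N' := toMeasurable μ N with hN'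
  have hN'0 : μ N' = 0 := by rw [hN', measure_toMeasurable, hN0]
  have hN'm : MeasurableSet N' := measurableSet_toMeasurable _ _
  have hgood : ∀ s ∉ N', s ≠ t ∧ ∀ i ∈ D, u s i = (hmk i).mk _ s := by
    intro s hs
    by_contra hc
    exact hs (subset_toMeasurable _ _ hc)
  set v : X → ℝ → ℂ := fun i => N'ᶜ.indicator (fun s => u s i) with hv
  have hvc : ∀ s, Continuous fun i => v i s := by
    intro s
    by_cases hs : s ∈ N'
    · simp only [hv, indicator, mem_compl_iff, hs, not_true_eq_false, if_false]
      exact continuous_const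
    · simp only [hv, indicator, mem_compl_iff, hs, not_false_eq_true, if_true]
      exact (hu s (hgood s hs).1).comp continuous_subtype_val
  have hvD : ∀ i ∈ D, StronglyMeasurable (v i) := by
    intro i hi
    have : v i = N'ᶜ.indicator ((hmk i).mk _) := by
      funext s
      by_cases hs : s ∈ N'
      · simp [hv, hs]
      · simp [hv, hs, (hgood s hs).2 i hi]
    rw [this]
    exact (hmk i).stronglyMeasurable_mk.indicator hN'm.compl
  have hvm : ∀ i, StronglyMeasurable (v i) := by
    intro i
    letI := TopologicalSpace.upgradeIsCompletelyMetrizable E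
    obtain ⟨xs, hxs, hlim⟩ := mem_closure_iff_seq_limit.1 (hDd i)
    refine stronglyMeasurable_of_tendsto atTop (fun n => hvD _ (hxs n)) ?_
    rw [tendsto_pi_nhds]
    intro s
    exact ((hvc s).tendsto i).comp hlim
  have hvu : StronglyMeasurable (Function.uncurry v) :=
    stronglyMeasurable_uncurry_of_continuous_of_stronglyMeasurable hvc hvm
  have hXemb : MeasurableEmbedding ((↑) : X → E) := MeasurableEmbedding.subtype_coe hXm
  haveI : SigmaFinite (ν.comap ((↑) : X → E)) := 
    SigmaFinite.of_map (ν.comap ((↑) : X → E)) hXemb.measurable.aemeasurable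
      (by rw [hXemb.map_comap]; infer_instance)
  have M := ls_minkowski μ (ν.comap ((↑) : X → E)) hq (fun i s => ‖v i s‖ₑ)
    hvu.measurable.enorm
  refine le_trans ?_ (M.trans ?_)
  · gcongr
    have h1 : ∫⁻ x, ‖∫ s in (0 : ℝ)..t, u s x‖ₑ ^ q ∂ν =
        ∫⁻ x in X, ‖∫ s in (0 : ℝ)..t, u s x‖ₑ ^ q ∂ν := by
      rw [← lintegral_indicator hXm]
      refine lintegral_congr fun x => ?_
      by_cases hx : x ∈ X
      · rw [indicator_of_mem hx]
      · rw [indicator_of_notMem hx]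
        have : ‖∫ s in (0 : ℝ)..t, u s x‖ = 0 := by
          rw [intervalIntegral.norm_intervalIntegral_eq, integral_non_aestronglyMeasurable hx,
            norm_zero]
        rw [← ofReal_norm, this]; simp [hq0]
    rw [h1, ← lintegral_subtype_comap hXm]
    refine lintegral_mono fun i => ?_
    gcongr
    have h2 : ‖∫ s in (0 : ℝ)..t, u s i‖ₑ = ‖∫ s, v i s ∂μ‖ₑ := by
      rw [← ofReal_norm, intervalIntegral.norm_intervalIntegral_eq, ofReal_norm]
      congr 1
      apply integral_congr_ae
      have : ∀ᵐ s ∂μ, s ∉ N' := measure_eq_zero_iff_ae_notMem.1 hN'0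
      filter_upwards [this] with s hs
      simp [hv, hs]
    rw [h2]
    exact enorm_integral_le_lintegral_enorm _
  · refine le_trans ?_ (setLIntegral_le_lintegral (uIoc 0 t) H)
    refine lintegral_mono_ae ?_
    filter_upwards [hμt] with s hs
    refine le_trans ?_ (hH s hs)
    gcongr
    rw [lintegral_subtype_comap hXm (fun x => ‖N'ᶜ.indicator (fun s => u s x) s‖ₑ ^ q)]
    refine (setLIntegral_le_lintegral _ _).trans (lintegral_mono fun x => ?_)
    gcongr
    by_cases hs : s ∈ N' <;> simp [hs]

end Mink
section HLS
open Filter Topology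

def lsKer (α τ : ℝ) : ℝ≥0∞ := ENNReal.ofReal (|τ| ^ (-α))

lemma lsKer_meas (α : ℝ) : Measurable (lsKer α) := by
  unfold lsKer; fun_prop

lemma lsKer_neg (α τ : ℝ) : lsKer α (-τ) = lsKer α τ := by simp [lsKer]

lemma lsKer_le {α : ℝ} (h0 : 0 < α) {R : ℝ} (hR : 0 < R) (τ : ℝ) : lsKer α τ ≤
    (Ioc 0 R).indicator (fun x => ENNReal.ofReal (x ^ (-α))) τ +
    (Ioc 0 R).indicator (fun x => ENNReal.ofReal (x ^ (-α))) (-τ) + ENNReal.ofReal (R ^ (-α)) := by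
  by_cases h : |τ| ≤ R
  · rcases lt_trichotomy τ 0 with ht | ht | ht
    · have : (-τ) ∈ Ioc 0 R := ⟨by linarith, by rwa [abs_of_neg ht] at h⟩
      rw [indicator_of_mem this]
      simp only [lsKer, abs_of_neg ht]
      exact le_add_right le_add_self
    · subst ht
      simp [lsKer, Real.zero_rpow (neg_ne_zero.2 h0.ne')]
    · have : τ ∈ Ioc 0 R := ⟨ht, by rwa [abs_of_pos ht] at h⟩
      rw [indicator_of_mem this]
      simp only [lsKer, abs_of_pos ht]
      exact le_add_right le_self_add
  · push Not at h
    refine le_add_left (ENNReal.ofReal_le_ofReal ?_)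
    exact Real.rpow_le_rpow_of_nonpos hR h.le (by linarith)

lemma ls_ker_set {α : ℝ} (h0 : 0 < α) (h1 : α < 1) (t : ℝ) (S : Set ℝ) :
    ∫⁻ s in S, lsKer α (t - s) ≤ ENNReal.ofReal (1 + 2 / (1 - α)) * volume S ^ (1 - α) := by
  have hC : 0 < 1 + 2 / (1 - α) := by have := div_pos two_pos (sub_pos.2 h1); linarith
  rcases eq_or_ne (volume S) 0 with hS | hS
  · rw [setLIntegral_measure_zero _ _ hS]; exact zero_le
  rcases eq_or_ne (volume S) ∞ with hT | hT
  · rw [hT, ENNReal.top_rpow_of_pos (by linarith), ENNReal.mul_top]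
    · exact le_top
    · simpa using hC
  set R := (volume S).toReal with hRd
  have hR : 0 < R := ENNReal.toReal_pos hS hT
  have hVR : volume S = ENNReal.ofReal R := (ENNReal.ofReal_toReal hT).symm
  set g : ℝ → ℝ≥0∞ := (Ioc 0 R).indicator (fun x => ENNReal.ofReal (x ^ (-α))) with hg
  have hgm : Measurable g := by
    apply Measurable.indicator _ measurableSet_Ioc
    fun_prop
  have hgi : ∫⁻ x, g x = ENNReal.ofReal (R ^ (1 - α) / (1 - α)) := by
    rw [hg, lintegral_indicator measurableSet_Ioc, ls_lint_rpow (by linarith) hR.le]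
    rw [show -α + 1 = 1 - α by ring]
  calc ∫⁻ s in S, lsKer α (t - s) ≤ ∫⁻ s in S, (g (t - s) + g (-(t - s)) + ENNReal.ofReal (R ^ (-α))) :=
        lintegral_mono fun s => lsKer_le h0 hR _
    _ = (∫⁻ s in S, (g (t - s) + g (-(t - s)))) + ENNReal.ofReal (R ^ (-α)) * volume S := by
        rw [lintegral_add_right _ measurable_const]; simp
    _ ≤ (∫⁻ s, (g (t - s) + g (-(t - s)))) + ENNReal.ofReal (R ^ (-α)) * volume S := by
        gcongr; exact Measure.restrict_le_self
    _ = (∫⁻ s, (g s + g (-s))) + ENNReal.ofReal (R ^ (-α)) * volume S := by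
        rw [lintegral_sub_left_eq_self (fun s => g s + g (-s)) t]
    _ = ENNReal.ofReal (R ^ (1 - α) / (1 - α)) + ENNReal.ofReal (R ^ (1 - α) / (1 - α)) +
          ENNReal.ofReal (R ^ (-α)) * ENNReal.ofReal R := by
        rw [lintegral_add_left hgm, lintegral_neg_eq_self g, hgi, hVR]
    _ = _ := by
        have e1 : R ^ (-α) * R = R ^ (1 - α) := by
          rw [show 1 - α = -α + 1 by ring, Real.rpow_add_one hR.ne']
        have h3 : 0 < R ^ (1 - α) := Real.rpow_pos_of_pos hR _
        have h4 : 0 < 1 - α := by linarith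
        rw [← ENNReal.ofReal_mul (by positivity), e1, ← ENNReal.ofReal_add (by positivity) (by positivity),
          ← ENNReal.ofReal_add (by positivity) (by positivity), hVR,
          ENNReal.ofReal_rpow_of_pos hR, ← ENNReal.ofReal_mul hC.le]
        congr 1
        field_simp
        ring

lemma ls_layer (g : ℝ≥0∞) :
    ∫⁻ σ in Ioi (0 : ℝ), {σ : ℝ | ENNReal.ofReal σ < g}.indicator (fun _ => (1 : ℝ≥0∞)) σ = g := by
  have hm : MeasurableSet {σ : ℝ | ENNReal.ofReal σ < g} :=
    measurableSet_lt ENNReal.measurable_ofReal measurable_const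
  rw [lintegral_indicator_const hm, one_mul, Measure.restrict_apply hm]
  rcases eq_or_ne g ∞ with h | h
  · have : {σ : ℝ | ENNReal.ofReal σ < g} = univ := by
      ext; simp [h]
    rw [this, univ_inter, Real.volume_Ioi, h]
  · have : {σ : ℝ | ENNReal.ofReal σ < g} ∩ Ioi 0 = Ioo 0 g.toReal := by
      ext σ
      simp only [mem_inter_iff, mem_ofPred_eq, mem_Ioi, mem_Ioo]
      constructor
      · rintro ⟨ha, hb⟩
        exact ⟨hb, (ENNReal.ofReal_lt_iff_lt_toReal hb.le h).1 ha⟩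
      · rintro ⟨hb, ha⟩
        exact ⟨(ENNReal.ofReal_lt_iff_lt_toReal hb.le h).2 ha, hb⟩
    rw [this, Real.volume_Ioo, sub_zero, ENNReal.ofReal_toReal h]

lemma ls_bilin {α : ℝ} (h0 : 0 < α) (h1 : α < 1) (G : ℝ → ℝ≥0∞) (hG : Measurable G) (A : Set ℝ) :
    ∫⁻ t in A, ∫⁻ s, lsKer α (t - s) * G s ≤ ENNReal.ofReal (1 + 2 / (1 - α)) *
      ∫⁻ σ in Ioi (0 : ℝ), min (volume A * volume {s | ENNReal.ofReal σ < G s} ^ (1 - α))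
        (volume {s | ENNReal.ofReal σ < G s} * volume A ^ (1 - α)) := by
  set C := ENNReal.ofReal (1 + 2 / (1 - α)) with hC
  set T : ℝ → Set ℝ := fun σ => {s | ENNReal.ofReal σ < G s} with hT
  have hTm : ∀ σ, MeasurableSet (T σ) := fun σ => measurableSet_lt measurable_const hG
  have hS : MeasurableSet {z : ℝ × ℝ | ENNReal.ofReal z.2 < G z.1} :=
    measurableSet_lt (by fun_prop) (by fun_prop)
  have hkm := lsKer_meas α
  have hf : Measurable fun z : ℝ × ℝ =>
      ({z : ℝ × ℝ | ENNReal.ofReal z.2 < G z.1}.indicator (fun _ => (1 : ℝ≥0∞)) z) :=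
    measurable_const.indicator hS
  have e1 : ∀ t, ∫⁻ s, lsKer α (t - s) * G s =
      ∫⁻ σ in Ioi (0 : ℝ), ∫⁻ s in T σ, lsKer α (t - s) := by
    intro t
    calc ∫⁻ s, lsKer α (t - s) * G s = ∫⁻ s, ∫⁻ σ in Ioi (0 : ℝ), lsKer α (t - s) *
          ({z : ℝ × ℝ | ENNReal.ofReal z.2 < G z.1}.indicator (fun _ => (1 : ℝ≥0∞)) (s, σ)) := by
          refine lintegral_congr fun s => ?_
          rw [lintegral_const_mul]
          · congr 1
            exact (ls_layer (G s)).symm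
          · exact hf.comp (measurable_const.prodMk measurable_id)
      _ = ∫⁻ σ in Ioi (0 : ℝ), ∫⁻ s, lsKer α (t - s) *
          ({z : ℝ × ℝ | ENNReal.ofReal z.2 < G z.1}.indicator (fun _ => (1 : ℝ≥0∞)) (s, σ)) := by
          rw [lintegral_lintegral_swap]
          apply Measurable.aemeasurable
          apply Measurable.mul
          · exact hkm.comp (by fun_prop)
          · exact hf
      _ = _ := by
          refine lintegral_congr fun σ => ?_
          rw [← lintegral_indicator (hTm σ)]
          refine lintegral_congr fun s => ?_
          by_cases h : s ∈ T σ
          · rw [indicator_of_mem h, indicator_of_mem (by exact h), mul_one]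
          · rw [indicator_of_notMem h, indicator_of_notMem (by exact h), mul_zero]
  simp_rw [e1]
  have hj : Measurable fun z : ℝ × ℝ => ∫⁻ s in T z.2, lsKer α (z.1 - s) := by
    have : (fun z : ℝ × ℝ => ∫⁻ s in T z.2, lsKer α (z.1 - s)) =
        fun z : ℝ × ℝ => ∫⁻ s, lsKer α (z.1 - s) *
          ({z : ℝ × ℝ | ENNReal.ofReal z.2 < G z.1}.indicator (fun _ => (1 : ℝ≥0∞)) (s, z.2)) := by
      funext z
      rw [← lintegral_indicator (hTm _)]
      refine lintegral_congr fun s => ?_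
      by_cases h : s ∈ T z.2
      · rw [indicator_of_mem h, indicator_of_mem (by exact h), mul_one]
      · rw [indicator_of_notMem h, indicator_of_notMem (by exact h), mul_zero]
    rw [this]
    apply Measurable.lintegral_prod_right' (f := fun z : (ℝ × ℝ) × ℝ => lsKer α (z.1.1 - z.2) *
      ({z : ℝ × ℝ | ENNReal.ofReal z.2 < G z.1}.indicator (fun _ => (1 : ℝ≥0∞)) (z.2, z.1.2)))
    apply Measurable.mul
    · exact hkm.comp (by fun_prop)
    · exact hf.comp (by fun_prop)
  rw [lintegral_lintegral_swap hj.aemeasurable]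
  rw [← lintegral_const_mul' _ _ ENNReal.ofReal_ne_top]
  refine lintegral_mono fun σ => ?_
  show _ ≤ C * min (volume A * volume (T σ) ^ (1 - α)) (volume (T σ) * volume A ^ (1 - α))
  have b1 : ∫⁻ t in A, ∫⁻ s in T σ, lsKer α (t - s) ≤ C * (volume A * volume (T σ) ^ (1 - α)) := by
    calc _ ≤ ∫⁻ t in A, C * volume (T σ) ^ (1 - α) := lintegral_mono fun t => ls_ker_set h0 h1 t _
      _ = _ := by rw [setLIntegral_const]; ring
  have b2 : ∫⁻ t in A, ∫⁻ s in T σ, lsKer α (t - s) ≤ C * (volume (T σ) * volume A ^ (1 - α)) := by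
    rw [lintegral_lintegral_swap]
    · calc _ ≤ ∫⁻ s in T σ, C * volume A ^ (1 - α) := by
            refine lintegral_mono fun s => ?_
            refine le_trans (le_of_eq ?_) (ls_ker_set h0 h1 s A)
            refine lintegral_congr fun t => ?_
            rw [← lsKer_neg, neg_sub]
        _ = _ := by rw [setLIntegral_const]; ring
    · exact (hkm.comp (by fun_prop)).aemeasurable
  rcases min_choice (volume A * volume (T σ) ^ (1 - α)) (volume (T σ) * volume A ^ (1 - α)) with h | h
  · rw [h]; exact b1
  · rw [h]; exact b2

end HLS
section HLS2
open Filter Topology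

def lsPhi (α : ℝ) (m : ℝ → ℝ≥0∞) (a : ℝ) : ℝ≥0∞ :=
  ∫⁻ σ in Ioi (0 : ℝ), min (m σ ^ (1 - α)) (m σ * ENNReal.ofReal (a ^ (-α)))

lemma ls_phi_bound {α : ℝ} (h0 : 0 < α) (h1 : α < 1) (G : ℝ → ℝ≥0∞) (hG : Measurable G)
    {l a : ℝ} (ha : 0 < a)
    (h : ENNReal.ofReal a < volume {t | ENNReal.ofReal l < ∫⁻ s, lsKer α (t - s) * G s}) :
    ENNReal.ofReal l ≤ ENNReal.ofReal (1 + 2 / (1 - α)) *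
      lsPhi α (fun σ => volume {s | ENNReal.ofReal σ < G s}) a := by
  set B := {t | ENNReal.ofReal l < ∫⁻ s, lsKer α (t - s) * G s} with hB
  set m : ℝ → ℝ≥0∞ := fun σ => volume {s | ENNReal.ofReal σ < G s} with hm
  have hIm : Measurable fun t => ∫⁻ s, lsKer α (t - s) * G s := by
    apply Measurable.lintegral_prod_right' (f := fun z : ℝ × ℝ => lsKer α (z.1 - z.2) * G z.2)
    exact ((lsKer_meas α).comp (by fun_prop)).mul (by fun_prop)
  have hBm : MeasurableSet B := measurableSet_lt measurable_const hIm
  obtain ⟨A, hAm, hA, hA1, hA2⟩ := Measure.exists_subset_measure_lt_top hBm h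
  have hb := ls_bilin h0 h1 G hG A
  have hl : ENNReal.ofReal l * volume A ≤ ∫⁻ t in A, ∫⁻ s, lsKer α (t - s) * G s := by
    rw [← setLIntegral_const]
    refine setLIntegral_mono hIm fun t ht => ?_
    exact (show ENNReal.ofReal l < _ from hA ht).le
  have hA0 : volume A ≠ 0 := (lt_of_le_of_lt zero_le hA1).ne'
  have hk : ∀ σ, min (volume A * m σ ^ (1 - α)) (m σ * volume A ^ (1 - α)) ≤
      volume A * min (m σ ^ (1 - α)) (m σ * ENNReal.ofReal (a ^ (-α))) := by
    intro σ
    have : m σ * volume A ^ (1 - α) ≤ volume A * (m σ * ENNReal.ofReal (a ^ (-α))) := by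
      rw [show 1 - α = 1 + -α by ring, ENNReal.rpow_add _ _ hA0 hA2.ne, ENNReal.rpow_one]
      have : volume A ^ (-α) ≤ ENNReal.ofReal (a ^ (-α)) := by
        rw [← ENNReal.ofReal_rpow_of_pos ha]
        rw [ENNReal.rpow_neg, ENNReal.rpow_neg, ENNReal.inv_le_inv]
        exact ENNReal.rpow_le_rpow hA1.le h0.le
      calc m σ * (volume A * volume A ^ (-α)) = volume A * (m σ * volume A ^ (-α)) := by ring
        _ ≤ _ := by gcongr
    rcases min_choice (m σ ^ (1 - α)) (m σ * ENNReal.ofReal (a ^ (-α))) with h | h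
    · rw [h]; exact min_le_left _ _
    · rw [h]; exact (min_le_right _ _).trans this
  have hfin : ENNReal.ofReal l * volume A ≤ (ENNReal.ofReal (1 + 2 / (1 - α)) * lsPhi α m a) * volume A := by
    refine hl.trans (hb.trans ?_)
    rw [mul_assoc]
    gcongr
    calc _ ≤ ∫⁻ σ in Ioi (0 : ℝ), volume A * min (m σ ^ (1 - α)) (m σ * ENNReal.ofReal (a ^ (-α))) :=
          lintegral_mono hk
      _ = _ := by rw [lintegral_const_mul' _ _ hA2.ne, mul_comm]; rfl
  exact (ENNReal.mul_le_mul_iff_left hA0 hA2.ne).1 hfin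

lemma ls_K_geo {α : ℝ} {x a : ℝ} (hx : 0 < x) (ha : 0 < a) :
    min (x ^ (1 - α)) (x * a ^ (-α)) ≤ x ^ (1 - α / 2) * a ^ (-(α / 2)) := by
  have e1 : (x ^ (1 - α / 2) * a ^ (-(α / 2))) ^ 2 = x ^ (1 - α) * (x * a ^ (-α)) := by
    rw [← Real.rpow_natCast, Real.mul_rpow (by positivity) (by positivity), ← Real.rpow_mul hx.le,
      ← Real.rpow_mul ha.le, ← mul_assoc, ← Real.rpow_add_one hx.ne']
    congr 2 <;> push_cast <;> ring
  have p1 : 0 < x ^ (1 - α) := Real.rpow_pos_of_pos hx _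
  have p2 : 0 < x * a ^ (-α) := by positivity
  apply le_of_sq_le_sq _ (by positivity)
  rw [e1, sq]
  exact mul_le_mul (min_le_left _ _) (min_le_right _ _) (le_min p1.le p2.le) p1.le

lemma ls_J_real {α : ℝ} (h0 : 0 < α) (h1 : α < 1) {x y : ℝ} (hx : 0 < x) (hy : 0 < y) :
    ∫⁻ a in Ioi (0 : ℝ), ENNReal.ofReal (a ^ (α - 1) * (min (x ^ (1 - α)) (x * a ^ (-α)) *
      min (y ^ (1 - α)) (y * a ^ (-α)))) ≤
      ENNReal.ofReal (4 / α * (x ^ (1 - 3 * α / 4) * y ^ (1 - α / 4))) := by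
  set c := (x * y) ^ (1 / 2 : ℝ) with hc
  have hcp : 0 < c := by positivity
  have hsplit : Ioi (0 : ℝ) = Ioc 0 c ∪ Ioi c := (Ioc_union_Ioi_eq_Ioi hcp.le).symm
  rw [hsplit]
  refine (lintegral_union_le _ _ _).trans ?_
  have i1 : ∫⁻ a in Ioc 0 c, ENNReal.ofReal (a ^ (α - 1) * (min (x ^ (1 - α)) (x * a ^ (-α)) *
      min (y ^ (1 - α)) (y * a ^ (-α)))) ≤
      ENNReal.ofReal (2 / α * (x ^ (1 - 3 * α / 4) * y ^ (1 - α / 4))) := by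
    calc _ ≤ ∫⁻ a in Ioc 0 c, ENNReal.ofReal (x ^ (1 - α) * y ^ (1 - α / 2)) *
          ENNReal.ofReal (a ^ (α / 2 - 1)) := by
          refine setLIntegral_mono (by fun_prop) fun a ha => ?_
          have ha0 : 0 < a := ha.1
          rw [← ENNReal.ofReal_mul (by positivity)]
          apply ENNReal.ofReal_le_ofReal
          calc _ ≤ a ^ (α - 1) * (x ^ (1 - α) * (y ^ (1 - α / 2) * a ^ (-(α / 2)))) := by
                gcongr
                · exact min_le_left _ _
                · exact ls_K_geo hy ha0
            _ = _ := by
                rw [show α / 2 - 1 = (α - 1) + -(α / 2) by ring, Real.rpow_add ha0]; ring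
      _ = _ := by
          rw [lintegral_const_mul' _ _ ENNReal.ofReal_ne_top, ls_lint_rpow (by linarith) hcp.le,
            ← ENNReal.ofReal_mul (by positivity)]
          congr 1
          rw [hc, ← Real.rpow_mul (by positivity), Real.mul_rpow hx.le hy.le,
            show 1 - 3 * α / 4 = (1 - α) + 1 / 2 * (α / 2 - 1 + 1) by ring, Real.rpow_add hx,
            show 1 - α / 4 = (1 - α / 2) + 1 / 2 * (α / 2 - 1 + 1) by ring, Real.rpow_add hy]
          rw [show α / 2 - 1 + 1 = α / 2 by ring]
          field_simp
  have i2 : ∫⁻ a in Ioi c, ENNReal.ofReal (a ^ (α - 1) * (min (x ^ (1 - α)) (x * a ^ (-α)) *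
      min (y ^ (1 - α)) (y * a ^ (-α)))) ≤
      ENNReal.ofReal (2 / α * (x ^ (1 - 3 * α / 4) * y ^ (1 - α / 4))) := by
    calc _ ≤ ∫⁻ a in Ioi c, ENNReal.ofReal (x ^ (1 - α / 2) * y) *
          ENNReal.ofReal (a ^ (-α / 2 - 1)) := by
          refine setLIntegral_mono (by fun_prop) fun a ha => ?_
          have ha0 : 0 < a := hcp.trans ha
          rw [← ENNReal.ofReal_mul (by positivity)]
          apply ENNReal.ofReal_le_ofReal
          calc _ ≤ a ^ (α - 1) * ((x ^ (1 - α / 2) * a ^ (-(α / 2))) * (y * a ^ (-α))) := by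
                gcongr
                · exact ls_K_geo hx ha0
                · exact min_le_right _ _
            _ = _ := by
                rw [show -α / 2 - 1 = (α - 1) + -(α / 2) + -α by ring, Real.rpow_add ha0,
                  Real.rpow_add ha0]; ring
      _ = _ := by
          rw [lintegral_const_mul' _ _ ENNReal.ofReal_ne_top, ls_lint_rpow_Ioi (by linarith) hcp,
            ← ENNReal.ofReal_mul (by positivity)]
          congr 1
          rw [hc, ← Real.rpow_mul (by positivity), Real.mul_rpow hx.le hy.le,
            show 1 - 3 * α / 4 = (1 - α / 2) + 1 / 2 * (-α / 2 - 1 + 1) by ring, Real.rpow_add hx,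
            show 1 - α / 4 = 1 + 1 / 2 * (-α / 2 - 1 + 1) by ring, Real.rpow_add hy, Real.rpow_one]
          rw [show -α / 2 - 1 + 1 = -(α / 2) by ring]
          field_simp
  refine (add_le_add i1 i2).trans (le_of_eq ?_)
  rw [← ENNReal.ofReal_add (by positivity) (by positivity)]
  congr 1; ring

lemma ls_J {α : ℝ} (h0 : 0 < α) (h1 : α < 1) (x y : ℝ≥0∞) :
    ∫⁻ a in Ioi (0 : ℝ), ENNReal.ofReal (a ^ (α - 1)) *
      (min (x ^ (1 - α)) (x * ENNReal.ofReal (a ^ (-α))) *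
      min (y ^ (1 - α)) (y * ENNReal.ofReal (a ^ (-α)))) ≤
      ENNReal.ofReal (4 / α) * (x ^ (1 - 3 * α / 4) * y ^ (1 - α / 4)) := by
  have hA : 0 < 1 - 3 * α / 4 := by linarith
  have hB : 0 < 1 - α / 4 := by linarith
  have h4 : ENNReal.ofReal (4 / α) ≠ 0 := by simp; positivity
  rcases eq_or_ne x 0 with hx | hx
  · subst hx; simp
  rcases eq_or_ne y 0 with hy | hy
  · subst hy; simp
  have px : x ^ (1 - 3 * α / 4) ≠ 0 := by simp [hx, hA.not_gt]
  have py : y ^ (1 - α / 4) ≠ 0 := by simp [hy, hB.not_gt]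
  rcases eq_or_ne x ∞ with hx' | hx'
  · rw [hx', ENNReal.top_rpow_of_pos hA, ENNReal.top_mul py, ENNReal.mul_top h4]; exact le_top
  rcases eq_or_ne y ∞ with hy' | hy'
  · rw [hy', ENNReal.top_rpow_of_pos hB, ENNReal.mul_top px, ENNReal.mul_top h4]; exact le_top
  obtain ⟨x, rfl⟩ : ∃ z : ℝ, x = ENNReal.ofReal z := ⟨_, (ENNReal.ofReal_toReal hx').symm⟩
  obtain ⟨y, rfl⟩ : ∃ z : ℝ, y = ENNReal.ofReal z := ⟨_, (ENNReal.ofReal_toReal hy').symm⟩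
  have hx0 : 0 < x := by simpa using hx
  have hy0 : 0 < y := by simpa using hy
  have := ls_J_real h0 h1 hx0 hy0
  rw [ENNReal.ofReal_mul (by positivity), ENNReal.ofReal_mul (by positivity)] at this
  rw [ENNReal.ofReal_rpow_of_pos (p := 1 - 3 * α / 4) hx0,
    ENNReal.ofReal_rpow_of_pos (p := 1 - α / 4) hy0]
  refine le_trans (le_of_eq ?_) this
  refine setLIntegral_congr_fun measurableSet_Ioi fun a ha => ?_
  have ha0 : (0 : ℝ) < a := ha
  rw [ENNReal.ofReal_rpow_of_pos hx0, ENNReal.ofReal_rpow_of_pos hy0,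
    ← ENNReal.ofReal_mul hx0.le, ← ENNReal.ofReal_mul hy0.le, ← ENNReal.ofReal_min,
    ← ENNReal.ofReal_min, ← ENNReal.ofReal_mul (by positivity), ← ENNReal.ofReal_mul (by positivity)]

lemma ls_young {A B : ℝ} (hA : 0 < A) (hB : 0 < B) (x y : ℝ≥0∞) {w : ℝ} (hw : 0 < w) :
    x ^ A * y ^ B ≤ x ^ (A + B) * ENNReal.ofReal w + y ^ (A + B) * ENNReal.ofReal (w ^ (-(A / B))) := by
  have hwp : 0 < w ^ (-(A / B)) := Real.rpow_pos_of_pos hw _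
  rcases le_total (y ^ B) (x ^ B * ENNReal.ofReal w) with h | h
  · refine le_add_right ?_
    rw [ENNReal.rpow_add_of_nonneg _ _ hA.le hB.le, mul_assoc]
    gcongr
  · refine le_add_left ?_
    rw [ENNReal.rpow_add_of_nonneg _ _ hA.le hB.le]
    have h2 := ENNReal.rpow_le_rpow h (div_pos hA hB).le
    rw [ENNReal.mul_rpow_of_nonneg _ _ (div_pos hA hB).le, ← ENNReal.rpow_mul, ← ENNReal.rpow_mul,
      mul_div_cancel₀ _ hB.ne', ENNReal.ofReal_rpow_of_pos hw] at h2
    calc x ^ A * y ^ B = (x ^ A * ENNReal.ofReal (w ^ (A / B))) * ENNReal.ofReal (w ^ (-(A / B))) * y ^ B := by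
          rw [mul_assoc (x ^ A), ← ENNReal.ofReal_mul (by positivity), ← Real.rpow_add hw]
          simp
      _ ≤ y ^ A * ENNReal.ofReal (w ^ (-(A / B))) * y ^ B := by gcongr
      _ = _ := by ring

end HLS2
section HLS3
open Filter Topology

def lsInd (σ τ : ℝ) : ℝ≥0∞ := if σ < τ then 1 else 0

lemma lsInd_meas : Measurable fun z : ℝ × ℝ => lsInd z.1 z.2 :=
  Measurable.ite (measurableSet_lt measurable_fst measurable_snd) measurable_const measurable_const

lemma ls_ind_left (f : ℝ → ℝ≥0∞) (σ : ℝ) (hσ : 0 < σ) :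
    ∫⁻ τ in Ioi (0 : ℝ), lsInd σ τ * f τ = ∫⁻ τ in Ioi σ, f τ := by
  have h : ∀ τ, lsInd σ τ * f τ = (Ioi σ).indicator f τ := by
    intro τ
    by_cases h : σ < τ <;> simp [lsInd, h]
  simp_rw [h]
  rw [lintegral_indicator measurableSet_Ioi, Measure.restrict_restrict measurableSet_Ioi,
    Ioi_inter_Ioi, sup_eq_left.2 hσ.le]

lemma ls_ind_right (f : ℝ → ℝ≥0∞) (τ : ℝ) :
    ∫⁻ σ in Ioi (0 : ℝ), lsInd σ τ * f σ = ∫⁻ σ in Ioc 0 τ, f σ := by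
  have h : ∀ σ, lsInd σ τ * f σ = (Iio τ).indicator f σ := by
    intro σ
    by_cases h : σ < τ <;> simp [lsInd, h]
  simp_rw [h]
  rw [lintegral_indicator measurableSet_Iio, Measure.restrict_restrict measurableSet_Iio,
    Iio_inter_Ioi]
  exact setLIntegral_congr Ioo_ae_eq_Ioc

lemma ls_sq (k : ℝ → ℝ≥0∞) (hk : Measurable k) :
    (∫⁻ σ in Ioi (0 : ℝ), k σ) * (∫⁻ σ in Ioi (0 : ℝ), k σ) ≤
      2 * ∫⁻ τ in Ioi (0 : ℝ), ∫⁻ σ in Ioi (0 : ℝ), lsInd σ τ * (k σ * k τ) := by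
  have hi := lsInd_meas
  have m1 : Measurable fun z : ℝ × ℝ => lsInd z.2 z.1 * (k z.2 * k z.1) :=
    (hi.comp measurable_swap).mul (by fun_prop)
  have m2 : Measurable fun z : ℝ × ℝ => lsInd z.1 z.2 * (k z.2 * k z.1) :=
    hi.mul (by fun_prop)
  apply le_of_eq
  calc _ = ∫⁻ τ in Ioi (0 : ℝ), ∫⁻ σ in Ioi (0 : ℝ), k σ * k τ := by
        rw [← lintegral_const_mul _ hk]
        refine lintegral_congr fun τ => ?_
        rw [lintegral_mul_const _ hk]
    _ = ∫⁻ τ in Ioi (0 : ℝ), ((∫⁻ σ in Ioi (0 : ℝ), lsInd σ τ * (k σ * k τ)) +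
          ∫⁻ σ in Ioi (0 : ℝ), lsInd τ σ * (k σ * k τ)) := by
        refine lintegral_congr fun τ => ?_
        have m3 : Measurable fun σ => lsInd σ τ * (k σ * k τ) :=
          m1.comp (measurable_const.prodMk measurable_id)
        rw [← lintegral_add_left m3]
        refine lintegral_congr_ae ?_
        have : ∀ᵐ σ ∂(volume.restrict (Ioi (0 : ℝ))), σ ≠ τ :=
          ae_restrict_of_ae (by simp [ae_iff])
        filter_upwards [this] with σ hσ
        rcases lt_or_gt_of_ne hσ with h | h
        · simp [lsInd, h, h.not_gt]
        · simp [lsInd, h, h.not_gt]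
    _ = (∫⁻ τ in Ioi (0 : ℝ), ∫⁻ σ in Ioi (0 : ℝ), lsInd σ τ * (k σ * k τ)) +
          ∫⁻ τ in Ioi (0 : ℝ), ∫⁻ σ in Ioi (0 : ℝ), lsInd τ σ * (k σ * k τ) := by
        rw [lintegral_add_left]
        exact m1.lintegral_prod_right'
    _ = 2 * ∫⁻ τ in Ioi (0 : ℝ), ∫⁻ σ in Ioi (0 : ℝ), lsInd σ τ * (k σ * k τ) := by
        rw [two_mul]
        congr 1
        rw [lintegral_lintegral_swap m2.aemeasurable]
        refine lintegral_congr fun τ => lintegral_congr fun σ => ?_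
        ring

lemma ls_double {A B : ℝ} (hA : 0 < A) (hAB : A < B) (m : ℝ → ℝ≥0∞) (hm : Measurable m) :
    ∫⁻ τ in Ioi (0 : ℝ), ∫⁻ σ in Ioi (0 : ℝ), lsInd σ τ * (m σ ^ A * m τ ^ B) ≤
      ENNReal.ofReal (2 * A / (B - A) + 2 * B / (B - A)) *
        ∫⁻ σ in Ioi (0 : ℝ), ENNReal.ofReal σ * m σ ^ (A + B) := by
  have hB : 0 < B := hA.trans hAB
  have hi := lsInd_meas
  set b := (A + B) / (2 * A) with hb
  set c := (A + B) / (2 * B) with hc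
  have hb1 : 1 < b := by rw [hb, lt_div_iff₀ (by positivity)]; linarith
  have hc1 : c < 1 := by rw [hc, div_lt_one (by positivity)]; linarith
  have hbc : b * (A / B) = c := by rw [hb, hc]; field_simp
  have hBA : 0 < B - A := by linarith
  have m1 : Measurable fun z : ℝ × ℝ => lsInd z.2 z.1 * (m z.2 ^ (A + B) * ENNReal.ofReal ((z.2 / z.1) ^ b)) :=
    (hi.comp measurable_swap).mul (by fun_prop)
  have hpt : ∀ τ ∈ Ioi (0 : ℝ), ∫⁻ σ in Ioi (0 : ℝ), lsInd σ τ * (m σ ^ A * m τ ^ B) ≤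
      (∫⁻ σ in Ioi (0 : ℝ), lsInd σ τ * (m σ ^ (A + B) * ENNReal.ofReal ((σ / τ) ^ b))) +
      ∫⁻ σ in Ioi (0 : ℝ), lsInd σ τ * (m τ ^ (A + B) * ENNReal.ofReal ((σ / τ) ^ (-c))) := by
    intro τ hτ
    have m3 : Measurable fun σ => lsInd σ τ * (m σ ^ (A + B) * ENNReal.ofReal ((σ / τ) ^ b)) :=
      m1.comp (measurable_const.prodMk measurable_id)
    rw [← lintegral_add_left m3]
    refine setLIntegral_mono' measurableSet_Ioi fun σ hσ => ?_
    have hst : 0 < σ / τ := div_pos hσ hτ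
    rw [← mul_add]
    gcongr
    refine (ls_young hA hB (m σ) (m τ) (Real.rpow_pos_of_pos hst b)).trans (le_of_eq ?_)
    rw [← Real.rpow_mul hst.le, mul_neg, hbc]
  have t2 : ∀ τ ∈ Ioi (0 : ℝ), ∫⁻ σ in Ioi (0 : ℝ), lsInd σ τ * (m τ ^ (A + B) * ENNReal.ofReal ((σ / τ) ^ (-c)))
      = ENNReal.ofReal (2 * B / (B - A)) * (ENNReal.ofReal τ * m τ ^ (A + B)) := by
    intro τ hτ
    have hτ0 : (0 : ℝ) < τ := hτ
    rw [ls_ind_right, lintegral_const_mul _ (by fun_prop)]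
    have : ∫⁻ σ in Ioc 0 τ, ENNReal.ofReal ((σ / τ) ^ (-c)) = ENNReal.ofReal (2 * B / (B - A) * τ) := by
      calc _ = ∫⁻ σ in Ioc 0 τ, ENNReal.ofReal (τ ^ c) * ENNReal.ofReal (σ ^ (-c)) := by
            refine setLIntegral_congr_fun measurableSet_Ioc fun σ hσ => ?_
            rw [← ENNReal.ofReal_mul (by positivity), Real.div_rpow hσ.1.le hτ0.le,
              Real.rpow_neg hτ0.le, div_inv_eq_mul, mul_comm]
        _ = _ := by
            rw [lintegral_const_mul' _ _ ENNReal.ofReal_ne_top, ls_lint_rpow (by linarith) hτ0.le,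
              ← ENNReal.ofReal_mul (by positivity)]
            congr 1
            rw [mul_div_assoc', ← Real.rpow_add hτ0, show c + (-c + 1) = 1 by ring, Real.rpow_one]
            have : -c + 1 = (B - A) / (2 * B) := by rw [hc]; field_simp; ring
            rw [this]
            field_simp
    rw [this, ENNReal.ofReal_mul (by positivity)]
    ring
  have t1 : ∀ σ ∈ Ioi (0 : ℝ), ∫⁻ τ in Ioi (0 : ℝ), lsInd σ τ * (m σ ^ (A + B) * ENNReal.ofReal ((σ / τ) ^ b))
      = ENNReal.ofReal (2 * A / (B - A)) * (ENNReal.ofReal σ * m σ ^ (A + B)) := by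
    intro σ hσ
    have hσ0 : (0 : ℝ) < σ := hσ
    rw [ls_ind_left _ _ hσ0, lintegral_const_mul _ (by fun_prop)]
    have : ∫⁻ τ in Ioi σ, ENNReal.ofReal ((σ / τ) ^ b) = ENNReal.ofReal (2 * A / (B - A) * σ) := by
      calc _ = ∫⁻ τ in Ioi σ, ENNReal.ofReal (σ ^ b) * ENNReal.ofReal (τ ^ (-b)) := by
            refine setLIntegral_congr_fun measurableSet_Ioi fun τ hτ => ?_
            have hτ0 : 0 < τ := hσ0.trans hτ
            rw [← ENNReal.ofReal_mul (by positivity), Real.div_rpow hσ0.le hτ0.le,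
              Real.rpow_neg hτ0.le, div_eq_mul_inv]
        _ = _ := by
            rw [lintegral_const_mul' _ _ ENNReal.ofReal_ne_top, ls_lint_rpow_Ioi (by linarith) hσ0,
              ← ENNReal.ofReal_mul (by positivity)]
            congr 1
            rw [mul_div_assoc', ← Real.rpow_add hσ0, show b + (-b + 1) = 1 by ring, Real.rpow_one]
            have : -(-b + 1) = (B - A) / (2 * A) := by rw [hb]; field_simp; ring
            rw [this]
            field_simp
    rw [this, ENNReal.ofReal_mul (by positivity)]
    ring
  refine (setLIntegral_mono' measurableSet_Ioi hpt).trans ?_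
  rw [lintegral_add_left m1.lintegral_prod_right', lintegral_lintegral_swap m1.aemeasurable,
    setLIntegral_congr_fun measurableSet_Ioi t1, setLIntegral_congr_fun measurableSet_Ioi t2,
    lintegral_const_mul' _ _ ENNReal.ofReal_ne_top, lintegral_const_mul' _ _ ENNReal.ofReal_ne_top,
    ENNReal.ofReal_add (by positivity) (by positivity), add_mul]

lemma ls_rpow_layer {α : ℝ} (h0 : 0 < α) (n : ℝ≥0∞) :
    n ^ α ≤ ∫⁻ a in Ioi (0 : ℝ), ENNReal.ofReal (α * a ^ (α - 1)) *
      (if ENNReal.ofReal a < n then 1 else 0) := by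
  have key : ∀ L : ℝ, 0 ≤ L → ENNReal.ofReal L ≤ n → ENNReal.ofReal (L ^ α) ≤
      ∫⁻ a in Ioi (0 : ℝ), ENNReal.ofReal (α * a ^ (α - 1)) *
      (if ENNReal.ofReal a < n then 1 else 0) := by
    intro L hL hLn
    calc ENNReal.ofReal (L ^ α) = ∫⁻ a in Ioc 0 L, ENNReal.ofReal α * ENNReal.ofReal (a ^ (α - 1)) := by
          rw [lintegral_const_mul' _ _ ENNReal.ofReal_ne_top, ls_lint_rpow (by linarith) hL,
            ← ENNReal.ofReal_mul h0.le, sub_add_cancel, mul_div_cancel₀ _ h0.ne']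
      _ = ∫⁻ a in Ioo 0 L, ENNReal.ofReal α * ENNReal.ofReal (a ^ (α - 1)) :=
          (setLIntegral_congr Ioo_ae_eq_Ioc).symm
      _ ≤ ∫⁻ a in Ioo 0 L, ENNReal.ofReal (α * a ^ (α - 1)) *
            (if ENNReal.ofReal a < n then 1 else 0) := by
          refine setLIntegral_mono' measurableSet_Ioo fun a ha => ?_
          have : ENNReal.ofReal a < n := lt_of_lt_of_le
            ((ENNReal.ofReal_lt_ofReal_iff (ha.1.trans ha.2)).2 ha.2) hLn
          rw [if_pos this, mul_one, ENNReal.ofReal_mul h0.le]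
      _ ≤ _ := lintegral_mono_set fun a ha => ha.1
  rcases eq_or_ne n ∞ with h | h
  · refine le_trans le_top (le_of_eq (ENNReal.eq_top_of_forall_nnreal_le fun r => ?_).symm)
    refine le_trans (le_of_eq ?_) (key ((r : ℝ) ^ (1 / α)) (by positivity) (by simp [h]))
    rw [← Real.rpow_mul r.coe_nonneg, one_div_mul_cancel h0.ne', Real.rpow_one, ENNReal.ofReal_coe_nnreal]
  · have := key n.toReal ENNReal.toReal_nonneg (by rw [ENNReal.ofReal_toReal h])
    rwa [← ENNReal.ofReal_rpow_of_nonneg ENNReal.toReal_nonneg h0.le, ENNReal.ofReal_toReal h] at this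

lemma ls_sq_layer (b : ℝ≥0∞) :
    ∫⁻ l in Ioi (0 : ℝ), ENNReal.ofReal l * (if ENNReal.ofReal l ≤ b then 1 else 0) ≤ b * b := by
  rcases eq_or_ne b ∞ with h | h
  · simp [h]
  calc _ ≤ ∫⁻ l in Ioi (0 : ℝ), (Ioc 0 b.toReal).indicator (fun _ => b) l := by
        refine setLIntegral_mono' measurableSet_Ioi fun l hl => ?_
        by_cases hb : ENNReal.ofReal l ≤ b
        · have : l ∈ Ioc 0 b.toReal := ⟨hl, (ENNReal.ofReal_le_iff_le_toReal h).1 hb⟩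
          rw [if_pos hb, mul_one, indicator_of_mem this]
          exact hb
        · rw [if_neg hb, mul_zero]; exact zero_le
    _ ≤ ∫⁻ l, (Ioc 0 b.toReal).indicator (fun _ => b) l := setLIntegral_le_lintegral _ _
    _ = _ := by
        rw [lintegral_indicator_const measurableSet_Ioc, Real.volume_Ioc, sub_zero,
          ENNReal.ofReal_toReal h]

end HLS3
section HLS4
open Filter Topology

lemma ls_m_anti (g : ℝ → ℝ≥0∞) : Antitone fun σ : ℝ => volume {s : ℝ | ENNReal.ofReal σ < g s} := by
  intro a b hab
  exact measure_mono fun s hs => lt_of_le_of_lt (ENNReal.ofReal_le_ofReal hab) hs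

lemma ls_phi_int {α : ℝ} (h0 : 0 < α) (h1 : α < 1) (m : ℝ → ℝ≥0∞) (hm : Measurable m) :
    ∫⁻ a in Ioi (0 : ℝ), ENNReal.ofReal (a ^ (α - 1)) * (lsPhi α m a * lsPhi α m a) ≤
      ENNReal.ofReal (2 * (4 / α) * (2 * (1 - 3 * α / 4) / (α / 2) + 2 * (1 - α / 4) / (α / 2))) *
        ∫⁻ σ in Ioi (0 : ℝ), ENNReal.ofReal σ * m σ ^ (2 - α) := by
  have hi := lsInd_meas
  have hA : 0 < 1 - 3 * α / 4 := by linarith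
  have hB : 0 < 1 - α / 4 := by linarith
  set K : ℝ → ℝ → ℝ≥0∞ := fun a σ => min (m σ ^ (1 - α)) (m σ * ENNReal.ofReal (a ^ (-α))) with hK
  have hKm : Measurable fun z : ℝ × ℝ => K z.1 z.2 := by
    simp only [hK]; fun_prop
  have hKa : ∀ a, Measurable (K a) := fun a => hKm.comp (measurable_const.prodMk measurable_id)
  have hf : Measurable fun z : (ℝ × ℝ) × ℝ => ENNReal.ofReal (z.1.1 ^ (α - 1)) *
      (lsInd z.2 z.1.2 * (K z.1.1 z.2 * K z.1.1 z.1.2)) := by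
    refine Measurable.mul (by fun_prop) (Measurable.mul ?_ (Measurable.mul ?_ ?_))
    · exact hi.comp (by fun_prop : Measurable fun z : (ℝ × ℝ) × ℝ => (z.2, z.1.2))
    · exact hKm.comp (by fun_prop : Measurable fun z : (ℝ × ℝ) × ℝ => (z.1.1, z.2))
    · exact hKm.comp (by fun_prop : Measurable fun z : (ℝ × ℝ) × ℝ => (z.1.1, z.1.2))
  calc ∫⁻ a in Ioi (0 : ℝ), ENNReal.ofReal (a ^ (α - 1)) * (lsPhi α m a * lsPhi α m a)
      ≤ ∫⁻ a in Ioi (0 : ℝ), 2 * ∫⁻ τ in Ioi (0 : ℝ), ∫⁻ σ in Ioi (0 : ℝ),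
          ENNReal.ofReal (a ^ (α - 1)) * (lsInd σ τ * (K a σ * K a τ)) := by
        refine lintegral_mono fun a => ?_
        have := ls_sq (K a) (hKa a)
        calc _ ≤ ENNReal.ofReal (a ^ (α - 1)) * (2 * ∫⁻ τ in Ioi (0 : ℝ), ∫⁻ σ in Ioi (0 : ℝ),
              (lsInd σ τ * (K a σ * K a τ))) := mul_le_mul_right this _
          _ = 2 * (ENNReal.ofReal (a ^ (α - 1)) * ∫⁻ τ in Ioi (0 : ℝ), ∫⁻ σ in Ioi (0 : ℝ),
              (lsInd σ τ * (K a σ * K a τ))) := by ring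
          _ = _ := by
              rw [← lintegral_const_mul' _ _ ENNReal.ofReal_ne_top]
              simp_rw [← lintegral_const_mul' _ _ (ENNReal.ofReal_ne_top (r := a ^ (α - 1)))]
    _ = 2 * ∫⁻ τ in Ioi (0 : ℝ), ∫⁻ σ in Ioi (0 : ℝ), ∫⁻ a in Ioi (0 : ℝ),
          ENNReal.ofReal (a ^ (α - 1)) * (lsInd σ τ * (K a σ * K a τ)) := by
        rw [lintegral_const_mul' _ _ (by simp)]
        congr 1
        rw [lintegral_lintegral_swap]
        · refine lintegral_congr fun τ => ?_
          rw [lintegral_lintegral_swap]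
          exact (hf.comp (by fun_prop : Measurable fun z : ℝ × ℝ => ((z.1, τ), z.2))).aemeasurable
        · exact (hf.lintegral_prod_right').aemeasurable
    _ ≤ 2 * ∫⁻ τ in Ioi (0 : ℝ), ∫⁻ σ in Ioi (0 : ℝ), ENNReal.ofReal (4 / α) *
          (lsInd σ τ * (m σ ^ (1 - 3 * α / 4) * m τ ^ (1 - α / 4))) := by
        gcongr with τ σ
        have hne : lsInd σ τ ≠ ∞ := by unfold lsInd; split_ifs <;> simp
        calc ∫⁻ a in Ioi (0 : ℝ), ENNReal.ofReal (a ^ (α - 1)) * (lsInd σ τ * (K a σ * K a τ))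
            = lsInd σ τ * ∫⁻ a in Ioi (0 : ℝ), ENNReal.ofReal (a ^ (α - 1)) * (K a σ * K a τ) := by
              rw [← lintegral_const_mul' _ _ hne]
              refine lintegral_congr fun a => ?_
              ring
          _ ≤ lsInd σ τ * (ENNReal.ofReal (4 / α) * (m σ ^ (1 - 3 * α / 4) * m τ ^ (1 - α / 4))) := by
              gcongr; exact ls_J h0 h1 _ _
          _ = _ := by ring
    _ = 2 * (ENNReal.ofReal (4 / α) * ∫⁻ τ in Ioi (0 : ℝ), ∫⁻ σ in Ioi (0 : ℝ),
          (lsInd σ τ * (m σ ^ (1 - 3 * α / 4) * m τ ^ (1 - α / 4)))) := by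
        simp_rw [lintegral_const_mul' _ _ (ENNReal.ofReal_ne_top (r := 4 / α))]
    _ ≤ 2 * (ENNReal.ofReal (4 / α) * (ENNReal.ofReal (2 * (1 - 3 * α / 4) / (α / 2) +
          2 * (1 - α / 4) / (α / 2)) * ∫⁻ σ in Ioi (0 : ℝ), ENNReal.ofReal σ * m σ ^ (2 - α))) := by
        gcongr
        refine (ls_double hA (by linarith) m hm).trans (le_of_eq ?_)
        rw [show 1 - α / 4 - (1 - 3 * α / 4) = α / 2 by ring,
          show 1 - 3 * α / 4 + (1 - α / 4) = 2 - α by ring]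
    _ = _ := by
        rw [ENNReal.ofReal_mul (by positivity), ENNReal.ofReal_mul (by positivity)]
        simp only [ENNReal.ofReal_ofNat]
        ring

lemma ls_hls {α : ℝ} (h0 : 0 < α) (h1 : α < 1) : ∃ C : ℝ, 0 < C ∧ ∀ G : ℝ → ℝ≥0∞, Measurable G →
    ∫⁻ l in Ioi (0 : ℝ), ENNReal.ofReal l *
      volume {t : ℝ | ENNReal.ofReal l < ∫⁻ s, lsKer α (t - s) * G s} ^ α ≤
    ENNReal.ofReal C * ∫⁻ l in Ioi (0 : ℝ), ENNReal.ofReal l *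
      volume {t : ℝ | ENNReal.ofReal l < G t} ^ (2 - α) := by
  set c := 1 + 2 / (1 - α) with hc
  have hc0 : 0 < c := by have := div_pos two_pos (sub_pos.2 h1); linarith
  set D := 2 * (4 / α) * (2 * (1 - 3 * α / 4) / (α / 2) + 2 * (1 - α / 4) / (α / 2)) with hD
  have hA : 0 < 1 - 3 * α / 4 := by linarith
  have hB : 0 < 1 - α / 4 := by linarith
  have hD0 : 0 < D := by positivity
  refine ⟨α * c * c * D, by positivity, fun G hG => ?_⟩
  set n : ℝ → ℝ≥0∞ := fun l => volume {t : ℝ | ENNReal.ofReal l < ∫⁻ s, lsKer α (t - s) * G s} with hn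
  set m : ℝ → ℝ≥0∞ := fun l => volume {t : ℝ | ENNReal.ofReal l < G t} with hm
  have hnm : Measurable n := (ls_m_anti _).measurable
  have hmm : Measurable m := (ls_m_anti _).measurable
  set w : ℝ → ℝ≥0∞ := fun a => ENNReal.ofReal (α * a ^ (α - 1)) with hw
  have hwm : Measurable w := by simp only [hw]; fun_prop
  have hjm : Measurable fun z : ℝ × ℝ => (if ENNReal.ofReal z.2 < n z.1 then (1 : ℝ≥0∞) else 0) :=
    Measurable.ite (measurableSet_lt (by fun_prop) (by fun_prop)) measurable_const measurable_const
  calc ∫⁻ l in Ioi (0 : ℝ), ENNReal.ofReal l * n l ^ α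
      ≤ ∫⁻ l in Ioi (0 : ℝ), ∫⁻ a in Ioi (0 : ℝ), ENNReal.ofReal l *
          (w a * (if ENNReal.ofReal a < n l then 1 else 0)) := by
        refine lintegral_mono fun l => ?_
        rw [lintegral_const_mul' _ _ ENNReal.ofReal_ne_top]
        gcongr
        exact ls_rpow_layer h0 (n l)
    _ = ∫⁻ a in Ioi (0 : ℝ), ∫⁻ l in Ioi (0 : ℝ), ENNReal.ofReal l *
          (w a * (if ENNReal.ofReal a < n l then 1 else 0)) := by
        rw [lintegral_lintegral_swap]
        exact Measurable.aemeasurable (Measurable.mul (by fun_prop)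
          (Measurable.mul (by fun_prop) hjm))
    _ ≤ ∫⁻ a in Ioi (0 : ℝ), w a * ((ENNReal.ofReal c * lsPhi α m a) * (ENNReal.ofReal c * lsPhi α m a)) := by
        refine setLIntegral_mono' measurableSet_Ioi fun a ha => ?_
        have hwa : w a ≠ ∞ := ENNReal.ofReal_ne_top
        calc _ ≤ ∫⁻ l in Ioi (0 : ℝ), w a * (ENNReal.ofReal l *
              (if ENNReal.ofReal l ≤ ENNReal.ofReal c * lsPhi α m a then 1 else 0)) := by
              refine lintegral_mono fun l => ?_
              by_cases h : ENNReal.ofReal a < n l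
              · rw [if_pos h, if_pos (ls_phi_bound h0 h1 G hG ha h)]
                simp [mul_comm]
              · simp [h]
          _ ≤ _ := by
              rw [lintegral_const_mul' _ _ hwa]
              gcongr
              exact ls_sq_layer _
    _ = ∫⁻ a in Ioi (0 : ℝ), ENNReal.ofReal (α * c * c) * (ENNReal.ofReal (a ^ (α - 1)) *
          (lsPhi α m a * lsPhi α m a)) := by
        refine lintegral_congr fun a => ?_
        simp only [hw]
        rw [ENNReal.ofReal_mul h0.le, ENNReal.ofReal_mul (by positivity), ENNReal.ofReal_mul h0.le]
        ring
    _ ≤ ENNReal.ofReal (α * c * c) * (ENNReal.ofReal D *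
          ∫⁻ σ in Ioi (0 : ℝ), ENNReal.ofReal σ * m σ ^ (2 - α)) := by
        rw [lintegral_const_mul' _ _ ENNReal.ofReal_ne_top]
        gcongr
        exact ls_phi_int h0 h1 m hmm
    _ = _ := by
        rw [ENNReal.ofReal_mul (p := α * c * c) (by positivity)]; ring

end HLS4
section Assemble
open Filter Topology

lemma ls_scale (h : ℝ → ℝ≥0∞) (hh : Measurable h) {k : ℝ} (hk : 0 < k) :
    ∫⁻ l in Ioi (0 : ℝ), ENNReal.ofReal l * h (l / k) =
      ENNReal.ofReal (k ^ 2) * ∫⁻ l in Ioi (0 : ℝ), ENNReal.ofReal l * h l := by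
  have hm : Measurable ((Ioi (0 : ℝ)).indicator fun l => ENNReal.ofReal l * h (l / k)) :=
    Measurable.indicator (by fun_prop) measurableSet_Ioi
  rw [← lintegral_indicator measurableSet_Ioi]
  conv_lhs => rw [← Real.smul_map_volume_mul_left hk.ne']
  rw [lintegral_smul_measure, lintegral_map hm (measurable_const_mul k),
    ← lintegral_indicator measurableSet_Ioi, abs_of_pos hk, sq, ENNReal.ofReal_mul hk.le, mul_assoc,
    ← lintegral_const_mul' _ _ (ENNReal.ofReal_ne_top (r := k)), smul_eq_mul]
  congr 1
  refine lintegral_congr fun l => ?_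
  by_cases hl : 0 < l
  · rw [indicator_of_mem (show k * l ∈ Ioi (0 : ℝ) from mul_pos hk hl),
      indicator_of_mem (show l ∈ Ioi (0 : ℝ) from hl), mul_div_cancel_left₀ _ hk.ne',
      ENNReal.ofReal_mul hk.le, mul_assoc]
  · have : ¬ (0 < k * l) := by
      intro hc; exact hl (pos_of_mul_pos_right hc hk.le)
    rw [indicator_of_notMem (show k * l ∉ Ioi (0 : ℝ) from this),
      indicator_of_notMem (show l ∉ Ioi (0 : ℝ) from hl), mul_zero]

lemma ls_majorant (g : ℝ → ℝ≥0∞) : ∃ G : ℝ → ℝ≥0∞, Measurable G ∧ (∀ s, g s ≤ G s) ∧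
    ∀ σ σ' : ℝ, 0 ≤ σ → σ < σ' → volume {s | ENNReal.ofReal σ' < G s} ≤ volume {s | ENNReal.ofReal σ < g s} := by
  classical
  set T : ℚ → Set ℝ := fun r => toMeasurable volume {s | ENNReal.ofReal (r : ℝ) < g s} with hT
  have hTm : ∀ r, MeasurableSet (T r) := fun r => measurableSet_toMeasurable _ _
  refine ⟨fun s => ⨅ r : ℚ, if s ∈ T r then ∞ else ENNReal.ofReal (r : ℝ), ?_, ?_, ?_⟩
  · refine Measurable.iInf fun r => ?_
    exact Measurable.ite (hTm r) measurable_const measurable_const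
  · intro s
    refine le_iInf fun r => ?_
    split_ifs with h
    · exact le_top
    · by_contra hc
      exact h (subset_toMeasurable _ _ (not_le.1 hc))
  · intro σ σ' h0 hs
    obtain ⟨r, hr1, hr2⟩ := exists_rat_btwn hs
    calc volume {s | ENNReal.ofReal σ' < ⨅ r : ℚ, if s ∈ T r then ∞ else ENNReal.ofReal (r : ℝ)}
        ≤ volume (T r) := by
          refine measure_mono fun s hs' => ?_
          by_contra hc
          have h1 : ENNReal.ofReal σ' < if s ∈ T r then ∞ else ENNReal.ofReal (r : ℝ) :=
            lt_of_lt_of_le hs' (iInf_le _ r)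
          rw [if_neg hc] at h1
          exact absurd (ENNReal.ofReal_le_ofReal hr2.le) (not_le.2 h1)
      _ = volume {s | ENNReal.ofReal (r : ℝ) < g s} := measure_toMeasurable _
      _ ≤ _ := measure_mono fun s hs' => lt_of_le_of_lt (ENNReal.ofReal_le_ofReal hr1.le) hs'

lemma ls_lorentz_eq {P : ℝ} (hP : 0 < P) (g : ℝ → ℝ≥0∞) :
    lorentzNorm (volume : Measure ℝ) (ENNReal.ofReal P) 2 g =
      (ENNReal.ofReal P * ∫⁻ l in Ioi (0 : ℝ), ENNReal.ofReal l *
        volume {t : ℝ | ENNReal.ofReal l < g t} ^ (2 / P)) ^ (1 / 2 : ℝ) := by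
  rw [lorentzNorm, if_neg (by simp)]
  congr 1
  · congr 1
    refine setLIntegral_congr_fun measurableSet_Ioi fun l hl => ?_
    have h0 : ENNReal.ofReal l ≠ 0 := by simpa using hl
    have e : (ENNReal.ofReal P)⁻¹.toReal = 1 / P := by
      rw [ENNReal.toReal_inv, ENNReal.toReal_ofReal hP.le, one_div]
    rw [e, ENNReal.toReal_ofNat, ENNReal.mul_rpow_of_nonneg _ _ (by norm_num), ← ENNReal.rpow_mul,
      show 1 / P * 2 = 2 / P by ring, show (2 : ℝ) = ((2 : ℕ) : ℝ) by norm_num,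
      ENNReal.rpow_natCast, sq, mul_assoc, ENNReal.mul_div_right_comm]
    rw [ENNReal.div_self h0 ENNReal.ofReal_ne_top, one_mul]
  · simp

lemma ls_final {P P' : ℝ} (hP : 2 < P) (hP' : 1 / P + 1 / P' = 1) {c : ℝ} (hc : 0 < c) :
    ∃ C : ℝ, 0 < C ∧ ∀ u g : ℝ → ℝ≥0∞,
      (∀ G : ℝ → ℝ≥0∞, Measurable G → (∀ s, g s ≤ G s) →
        ∀ t, u t ≤ ENNReal.ofReal c * ∫⁻ s, lsKer (2 / P) (t - s) * G s) →
      lorentzNorm (volume : Measure ℝ) (ENNReal.ofReal P) 2 u ≤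
        ENNReal.ofReal C * lorentzNorm (volume : Measure ℝ) (ENNReal.ofReal P') 2 g := by
  have hP0 : 0 < P := by linarith
  have hα0 : 0 < 2 / P := by positivity
  have hα1 : 2 / P < 1 := by rw [div_lt_one hP0]; exact hP
  have h1P' : 1 / P' = 1 - 1 / P := by linarith
  have hP'0 : 0 < P' := by
    rw [← one_div_pos, h1P']
    have : 1 / P < 1 := by rw [div_lt_one hP0]; linarith
    linarith
  have h2 : 2 / P' = 2 - 2 / P := by
    have : 2 / P' = 2 * (1 / P') := by ring
    rw [this, h1P']; ring
  obtain ⟨C, hC0, hC⟩ := ls_hls hα0 hα1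
  set D := P * C * (2 * c) ^ 2 / P' with hD
  have hD0 : 0 < D := by positivity
  refine ⟨D ^ (1 / 2 : ℝ), by positivity, fun u g hu => ?_⟩
  obtain ⟨G, hGm, hgG, hG⟩ := ls_majorant g
  rw [ls_lorentz_eq hP0, ls_lorentz_eq hP'0, ← ENNReal.ofReal_rpow_of_pos hD0,
    ← ENNReal.mul_rpow_of_nonneg _ _ (by norm_num), h2]
  refine ENNReal.rpow_le_rpow ?_ (by norm_num)
  set m : ℝ → ℝ≥0∞ := fun l => volume {t : ℝ | ENNReal.ofReal l < g t} with hm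
  have hmm : Measurable m := (ls_m_anti _).measurable
  set G' : ℝ → ℝ≥0∞ := fun s => ENNReal.ofReal c * G s with hG'
  have hG'm : Measurable G' := hGm.const_mul _
  have hu' : ∀ t, u t ≤ ∫⁻ s, lsKer (2 / P) (t - s) * G' s := by
    intro t
    refine (hu G hGm hgG t).trans (le_of_eq ?_)
    rw [← lintegral_const_mul' _ _ ENNReal.ofReal_ne_top]
    refine lintegral_congr fun s => ?_
    simp only [hG']; ring
  have s1 : ∫⁻ l in Ioi (0 : ℝ), ENNReal.ofReal l * volume {t : ℝ | ENNReal.ofReal l < u t} ^ (2 / P) ≤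
      ∫⁻ l in Ioi (0 : ℝ), ENNReal.ofReal l *
        volume {t : ℝ | ENNReal.ofReal l < ∫⁻ s, lsKer (2 / P) (t - s) * G' s} ^ (2 / P) := by
    refine lintegral_mono fun l => ?_
    gcongr with t
    exact hu' _
  have s2 : ∫⁻ l in Ioi (0 : ℝ), ENNReal.ofReal l * volume {t : ℝ | ENNReal.ofReal l < G' t} ^ (2 - 2 / P) ≤
      ∫⁻ l in Ioi (0 : ℝ), ENNReal.ofReal l * m (l / (2 * c)) ^ (2 - 2 / P) := by
    refine setLIntegral_mono' measurableSet_Ioi fun l hl => ?_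
    have hl0 : (0 : ℝ) < l := hl
    gcongr
    · linarith
    refine le_trans (measure_mono ?_) (hG (l / (2 * c)) (l / c) (by positivity) (by
      apply div_lt_div_of_pos_left hl0 hc; linarith))
    intro s hs
    have hs1 : ENNReal.ofReal l < ENNReal.ofReal c * G s := hs
    show ENNReal.ofReal (l / c) < G s
    by_contra hcon
    have h3 : ENNReal.ofReal c * G s ≤ ENNReal.ofReal c * ENNReal.ofReal (l / c) :=
      mul_le_mul_right (not_lt.1 hcon) _
    rw [← ENNReal.ofReal_mul hc.le, mul_div_cancel₀ _ hc.ne'] at h3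
    exact absurd hs1 (not_lt.2 h3)
  calc _ ≤ ENNReal.ofReal P * (ENNReal.ofReal C * (ENNReal.ofReal ((2 * c) ^ 2) *
        ∫⁻ l in Ioi (0 : ℝ), ENNReal.ofReal l * m l ^ (2 - 2 / P))) := by
        gcongr
        refine s1.trans ((hC G' hG'm).trans ?_)
        gcongr
        refine s2.trans (le_of_eq ?_)
        exact ls_scale (fun l => m l ^ (2 - 2 / P)) (hmm.pow_const _) (by positivity)
    _ = ENNReal.ofReal D * ENNReal.ofReal P' * ∫⁻ l in Ioi (0 : ℝ), ENNReal.ofReal l * m l ^ (2 - 2 / P) := by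
        rw [← mul_assoc, ← mul_assoc, ← ENNReal.ofReal_mul (by positivity),
          ← ENNReal.ofReal_mul (by positivity), ← ENNReal.ofReal_mul (by positivity), hD,
          div_mul_cancel₀ _ hP'0.ne']
    _ = _ := by rw [mul_assoc]

lemma lsK_le (d : ℕ) {τ θ α : ℝ} (hτ : τ ≠ 0) (hα : 0 < α) (h : (d : ℝ) / 2 * θ = α) :
    ENNReal.ofReal (lsK d τ ^ θ) ≤ lsKer α τ := by
  unfold lsKer lsK
  apply ENNReal.ofReal_le_ofReal
  have hτ' : 0 < |τ| := abs_pos.2 hτ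
  rw [← Real.rpow_mul (by positivity), show -(d : ℝ) / 2 * θ = -α by rw [← h]; ring]
  apply Real.rpow_le_rpow_of_nonpos hτ' _ (by linarith)
  have := Real.pi_gt_three
  nlinarith

lemma ls_point_top (d : ℕ) {α : ℝ} (hα : 0 < α) (h : (d : ℝ) / 2 = α)
    (F : ℝ → EuclideanSpace ℝ (Fin d) → ℂ) (G : ℝ → ℝ≥0∞)
    (hG : ∀ s, eLpNorm (F s) 1 volume ≤ G s) (t : ℝ) :
    eLpNorm (fun x => ∫ s in (0:ℝ)..t, schrod d (t - s) (F s) x) ∞ volume ≤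
      ∫⁻ s, lsKer α (t - s) * G s := by
  rw [eLpNorm_exponent_top]
  apply eLpNormEssSup_le_of_ae_enorm_bound
  refine Eventually.of_forall fun x => ?_
  rw [← ofReal_norm, intervalIntegral.norm_intervalIntegral_eq, ofReal_norm]
  refine (enorm_integral_le_lintegral_enorm _).trans ?_
  refine le_trans ?_ (setLIntegral_le_lintegral (uIoc 0 t) _)
  refine lintegral_mono_ae ?_
  have : ∀ᵐ s ∂(volume.restrict (uIoc 0 t)), s ≠ t := ae_restrict_of_ae (by simp [ae_iff])
  filter_upwards [this] with s hs
  have hts : t - s ≠ 0 := sub_ne_zero.2 (Ne.symm hs)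
  refine (ls_schrod_sup hts (F s) x).trans ?_
  have h1 := lsK_le d (θ := 1) hts hα (by rw [mul_one, h])
  rw [Real.rpow_one] at h1
  have h2 := hG s
  rw [eLpNorm_one_eq_lintegral_enorm] at h2
  exact mul_le_mul' h1 h2

lemma ls_point_fin (d : ℕ) {α q r : ℝ} (hα : 0 < α) (hq : 2 < q) (hr : 1 < r)
    (hqr : 1 / q + 1 / r = 1) (h : (d : ℝ) / 2 * (1 - 2 / q) = α)
    (F : ℝ → EuclideanSpace ℝ (Fin d) → ℂ) (G : ℝ → ℝ≥0∞) (hGm : Measurable G)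
    (hG : ∀ s, (∫⁻ x, ‖F s x‖ₑ ^ r) ^ (1 / r) ≤ G s) (t : ℝ) :
    (∫⁻ x, ‖∫ s in (0:ℝ)..t, schrod d (t - s) (F s) x‖ₑ ^ q) ^ (1 / q) ≤
      ENNReal.ofReal ((2 ^ q * q / (q - 2)) ^ (1 / q)) * ∫⁻ s, lsKer α (t - s) * G s := by
  rw [← lintegral_const_mul' _ _ ENNReal.ofReal_ne_top]
  apply ls_mink_int volume (by linarith) t (fun s => schrod d (t - s) (F s))
  · intro s hs
    exact ls_schrod_cont (sub_ne_zero.2 (Ne.symm hs)) _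
  · intro s hs
    have hts : t - s ≠ 0 := sub_ne_zero.2 (Ne.symm hs)
    refine (ls_disp hts hq hr hqr (F s)).trans ?_
    have hq2 : 0 < q - 2 := by linarith
    rw [ENNReal.ofReal_mul (by positivity), mul_assoc]
    gcongr
    · exact lsK_le d hts hα h
    · exact hG s

end Assemble

/-- **Inhomogeneous (retarded) Lorentz–Strichartz estimate.**  Fix `d ≥ 1` and a
Schrödinger-admissible pair `(p, q)` with `2 < p < ∞`, `2 ≤ q ≤ ∞`, `2/p + d/q = d/2`.
With `p'`, `q'` the conjugate exponents, for every spacetime `F` with finite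
`L^{p',2}_t L^{q'}_x(ℝ×ℝ^d)` norm,
`‖∫_0^t e^{i(t-s)Δ} F(s) ds‖_{L^{p,2}_t L^q_x(ℝ×ℝ^d)} ≤ C ‖F‖_{L^{p',2}_t L^{q'}_x(ℝ×ℝ^d)}`
with `C = C(d, p, q)`. -/
theorem lorentz_strichartz_inhomogeneous (d : ℕ) (hd : 1 ≤ d) (p p' : ℝ) (q q' : ℝ≥0∞)
    (hp : 2 < p) (hp' : 1 / p + 1 / p' = 1) (hq : 2 ≤ q) (hq' : 1 / q + 1 / q' = 1)
    (adm : 2 / ENNReal.ofReal p + (d : ℝ≥0∞) / q = (d : ℝ≥0∞) / 2) :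
    ∃ C : ℝ, 0 < C ∧
      ∀ F : ℝ → EuclideanSpace ℝ (Fin d) → ℂ,
        lorentzNorm (volume : Measure ℝ) (ENNReal.ofReal p') 2
            (fun t => eLpNorm (F t) q' volume) ≠ ∞ →
        lorentzNorm (volume : Measure ℝ) (ENNReal.ofReal p) 2
            (fun t => eLpNorm (fun x => ∫ s in (0:ℝ)..t, schrod d (t - s) (F s) x) q volume) ≤
          ENNReal.ofReal C *
            lorentzNorm (volume : Measure ℝ) (ENNReal.ofReal p') 2
              (fun t => eLpNorm (F t) q' volume) := by
  have hp0 : 0 < p := by linarith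
  have hα : 0 < 2 / p := by positivity
  have hd0 : (0 : ℝ) < d := by exact_mod_cast hd
  have hop : ENNReal.ofReal p ≠ 0 := by simpa using hp0
  have e1 : (2 / ENNReal.ofReal p).toReal = 2 / p := by
    rw [ENNReal.toReal_div, ENNReal.toReal_ofReal hp0.le]; simp
  have f1 : 2 / ENNReal.ofReal p ≠ ∞ := ENNReal.div_ne_top (by simp) hop
  have hq0 : q ≠ 0 := (lt_of_lt_of_le (by norm_num) hq).ne'
  have f2 : (d : ℝ≥0∞) / q ≠ ∞ := ENNReal.div_ne_top (by simp) hq0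
  have adm' := congrArg ENNReal.toReal adm
  rw [ENNReal.toReal_add f1 f2, e1, ENNReal.toReal_div, ENNReal.toReal_div] at adm'
  simp only [ENNReal.toReal_natCast, ENNReal.toReal_ofNat] at adm'
  rcases eq_or_ne q ∞ with hqt | hqt
  · subst hqt
    have hq1 : q' = 1 := by
      simpa using hq'
    subst hq1
    simp only [ENNReal.toReal_top, div_zero, add_zero] at adm'
    obtain ⟨C, hC0, hC⟩ := ls_final hp hp' one_pos
    refine ⟨C, hC0, fun F _ => hC _ _ fun G hGm hG t => ?_⟩
    rw [ENNReal.ofReal_one, one_mul]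
    exact ls_point_top d hα adm'.symm F G hG t
  · set Q := q.toReal with hQ
    have hQ2' : 2 ≤ Q := by
      have := ENNReal.toReal_mono hqt hq
      simpa using this
    have hQ0 : 0 < Q := by linarith
    have hQ2 : 2 < Q := by
      rcases hQ2'.lt_or_eq with h | h
      · exact h
      · rw [← h] at adm'; linarith
    have hq'0 : q' ≠ 0 := by
      rintro rfl
      simp at hq'
    have hq't : q' ≠ ∞ := by
      rintro rfl
      have := congrArg ENNReal.toReal hq'
      simp only [one_div, ENNReal.inv_top, add_zero, ENNReal.toReal_inv, ENNReal.toReal_one] at this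
      rw [← hQ] at this
      have h3 : Q = 1 := by rwa [inv_eq_one] at this
      linarith
    set r := q'.toReal with hr
    have hr0 : 0 < r := ENNReal.toReal_pos hq'0 hq't
    have hQr : 1 / Q + 1 / r = 1 := by
      have := congrArg ENNReal.toReal hq'
      rwa [ENNReal.toReal_add (ENNReal.div_ne_top (by simp) hq0) (ENNReal.div_ne_top (by simp) hq'0),
        ENNReal.toReal_div, ENNReal.toReal_div, ENNReal.toReal_one] at this
    have hr1 : 1 < r := by
      have : 0 < 1 / Q := by positivity
      have h4 : 1 / r < 1 := by linarith
      rwa [div_lt_one hr0] at h4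
    have hQ3 : 0 < Q - 2 := by linarith
    have hadm : (d : ℝ) / 2 * (1 - 2 / Q) = 2 / p := by
      have : (d : ℝ) / 2 * (1 - 2 / Q) = d / 2 - d / Q := by field_simp
      linarith
    obtain ⟨C, hC0, hC⟩ := ls_final hp hp' (c := (2 ^ Q * Q / (Q - 2)) ^ (1 / Q)) (by positivity)
    refine ⟨C, hC0, fun F _ => hC _ _ fun G hGm hG t => ?_⟩
    rw [eLpNorm_eq_lintegral_rpow_enorm_toReal hq0 hqt]
    refine ls_point_fin d hα hQ2 hr1 hQr hadm F G hGm (fun s => ?_) t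
    have := hG s
    rwa [eLpNorm_eq_lintegral_rpow_enorm_toReal hq'0 hq't] at this
end
end
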